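/- arXiv:2012.05485 — 7 statements merged into one kernel-verified Lean document; each statement's English description precedes it below -/
import Mathlib

section
/- Let ABC be a triangle. Let B' be a point on line AB and C' a point on line AC such that dist(B,B') = dist(C,C') and B' and C' lie strictly on opposite sides of line BC. Let D be a point on the circumcircle of ABC with dist(D,B) = dist(D,C) and such that D and A lie strictly on opposite sides of line BC (so D is the second intersection of the internal bisector of angle A with the circumcircle). Then dist(D,B') = dist(D,C'). -/
open EuclideanGeometry

noncomputable section

/-- The Euclidean plane. -/
abbrev Pt := EuclideanSpace ℝ (Fin 2)

/-- The pedal (orthogonal projection) of `P` on the line `XY` (the affine span of `{X, Y}`). -/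
def pedal (P X Y : Pt) : Pt :=
  EuclideanGeometry.orthogonalProjection (affineSpan ℝ {X, Y}) P

/-- The reflection of `P` in the line `XY` (the affine span of `{X, Y}`). -/
def lineReflect (X Y P : Pt) : Pt :=
  EuclideanGeometry.reflection (affineSpan ℝ {X, Y}) P

/-- The circumcenter of the triangle `ABC`. -/
def circumcenter3 (A B C : Pt) (h : AffineIndependent ℝ ![A, B, C]) : Pt :=
  (⟨![A, B, C], h⟩ : Affine.Triangle ℝ Pt).circumcenter

/-- The circumradius of the triangle `ABC`. -/
def circumradius3 (A B C : Pt) (h : AffineIndependent ℝ ![A, B, C]) : ℝ :=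
  (⟨![A, B, C], h⟩ : Affine.Triangle ℝ Pt).circumradius

/-- The orthocenter of the triangle `ABC`. -/
def orthocenter3 (A B C : Pt) (h : AffineIndependent ℝ ![A, B, C]) : Pt :=
  Affine.Triangle.orthocenter (⟨![A, B, C], h⟩ : Affine.Triangle ℝ Pt)

/-- The incenter of the triangle `ABC`: `(a•A + b•B + c•C)/(a+b+c)` with
`a = dist B C`, `b = dist C A`, `c = dist A B`. -/
def incenter3 (A B C : Pt) : Pt :=
  (dist B C + dist C A + dist A B)⁻¹ •
    (dist B C • A + dist C A • B + dist A B • C)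

/-- The centroid of the triangle `ABC`. -/
def centroid3 (A B C : Pt) : Pt := (3 : ℝ)⁻¹ • (A + B + C)

/-- The Nagel point of the triangle `ABC`:
`((s−a)/s)•A + ((s−b)/s)•B + ((s−c)/s)•C` with `s` the semiperimeter. -/
def nagelPoint (A B C : Pt) : Pt :=
  (((dist B C + dist C A + dist A B) / 2 - dist B C) /
      ((dist B C + dist C A + dist A B) / 2)) • A +
    (((dist B C + dist C A + dist A B) / 2 - dist C A) /
      ((dist B C + dist C A + dist A B) / 2)) • B +
    (((dist B C + dist C A + dist A B) / 2 - dist A B) /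
      ((dist B C + dist C A + dist A B) / 2)) • C

/-!
Chords `AD` and `BC` cross at a point `P` inside the sphere, and the similar triangles at `P` show
that the opposite angles of the cyclic quadrilateral `ABDC` at `B` and `C` add up to `π`. Since `B'`
and `C'` lie on opposite sides of `BC`, exactly one of them lies on the ray from `B`, respectively
`C`, towards `A`, and the other one on the opposite ray. Hence `∠ DBB' = ∠ DCC'`, and the triangles
`DBB'` and `DCC'` are congruent by side-angle-side.
-/

section Side

variable {R V P : Type*} [Field R] [LinearOrder R] [IsStrictOrderedRing R] [AddCommGroup V]
  [Module R V] [AddTorsor V P] {s : AffineSubspace R P} {o a : P} {t : R}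

lemma sSameSide_lineMap_left_iff (ho : o ∈ s) (ha : a ∉ s) :
    s.SSameSide (AffineMap.lineMap o a t) a ↔ 0 < t :=
  ⟨fun h ↦ lt_of_not_ge fun ht ↦
    h.not_wOppSide (AffineSubspace.wOppSide_lineMap_left a ho ht),
    AffineSubspace.sSameSide_lineMap_left ho ha⟩

lemma sOppSide_lineMap_left_iff (ho : o ∈ s) (ha : a ∉ s) :
    s.SOppSide (AffineMap.lineMap o a t) a ↔ t < 0 :=
  ⟨fun h ↦ lt_of_not_ge fun ht ↦
    h.not_wSameSide (AffineSubspace.wSameSide_lineMap_left a ho ht),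
    AffineSubspace.sOppSide_lineMap_left ho ha⟩

end Side

section Euclidean

variable {V P : Type*} [NormedAddCommGroup V] [InnerProductSpace ℝ V] [MetricSpace P]
  [NormedAddTorsor V P]

lemma angle_lineMap_of_pos (d o a : P) {t : ℝ} (ht : 0 < t) :
    ∠ d o (AffineMap.lineMap o a t) = ∠ d o a := by
  rw [angle, AffineMap.lineMap_vsub_left, InnerProductGeometry.angle_smul_right_of_pos _ _ ht,
    angle]

lemma angle_lineMap_of_neg (d o a : P) {t : ℝ} (ht : t < 0) :
    ∠ d o (AffineMap.lineMap o a t) = Real.pi - ∠ d o a := by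
  rw [angle, AffineMap.lineMap_vsub_left, InnerProductGeometry.angle_smul_right_of_neg _ _ ht,
    InnerProductGeometry.angle_neg_right, angle]

lemma angle_eq_angle_of_sOppSide {s : AffineSubspace ℝ P} {a b c d b' c' : P}
    (ha : a ∉ s) (hb : b ∈ s) (hc : c ∈ s) (hb' : b' ∈ line[ℝ, a, b]) (hc' : c' ∈ line[ℝ, a, c])
    (hopp : s.SOppSide b' c') (hangle : ∠ d b a + ∠ d c a = Real.pi) :
    ∠ d b b' = ∠ d c c' := by
  rw [Set.pair_comm, mem_affineSpan_pair_iff_exists_lineMap_eq] at hb' hc'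
  obtain ⟨t, rfl⟩ := hb'
  obtain ⟨u, rfl⟩ := hc'
  have ht₀ : t ≠ 0 := by
    rintro rfl
    exact hopp.left_notMem (by rwa [AffineMap.lineMap_apply_zero])
  rcases ht₀.lt_or_gt with ht | ht
  · have hu : 0 < u := (sSameSide_lineMap_left_iff hc ha).1
      (hopp.symm.trans ((sOppSide_lineMap_left_iff hb ha).2 ht))
    rw [angle_lineMap_of_neg _ _ _ ht, angle_lineMap_of_pos _ _ _ hu]
    linarith
  · have hu : u < 0 := (sOppSide_lineMap_left_iff hc ha).1
      (hopp.symm.trans_sSameSide ((sSameSide_lineMap_left_iff hb ha).2 ht))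
    rw [angle_lineMap_of_pos _ _ _ ht, angle_lineMap_of_neg _ _ _ hu]
    linarith

lemma exists_sbtw_sbtw_of_cospherical_of_sOppSide {a b c d : P}
    (hcosph : Cospherical ({a, b, c, d} : Set P)) (hopp : line[ℝ, b, c].SOppSide a d) :
    ∃ p, Sbtw ℝ a p d ∧ Sbtw ℝ b p c := by
  obtain ⟨S, hS⟩ := cospherical_iff_exists_sphere.1 hcosph
  have hb : b ∈ S := hS (by simp)
  have hc : c ∈ S := hS (by simp)
  obtain ⟨p, hp, hapd⟩ := hopp.exists_sbtw
  have hp_lt : dist p S.center < S.radius := by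
    rw [dist_comm]
    exact Sphere.dist_center_lt_radius_of_sbtw (hS (by simp)) (hS (by simp)) hapd
  have hbc : b ≠ c := by
    rintro rfl
    rw [Set.pair_eq_singleton, AffineSubspace.mem_affineSpan_singleton] at hp
    exact hp_lt.ne (hp ▸ hb)
  have hcol : Collinear ℝ {b, p, c} := by
    rw [Set.insert_comm]
    exact collinear_insert_of_mem_affineSpan_pair hp
  exact ⟨p, hapd, sbtw_of_collinear_of_dist_center_lt_radius hcol hb hp_lt hc hbc⟩

theorem similar_of_cospherical_of_sbtw_of_sbtw {a b c d p : P}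
    (hcosph : Cospherical ({a, b, c, d} : Set P)) (hapd : Sbtw ℝ a p d) (hbpc : Sbtw ℝ b p c) :
    Similar ![p, b, d] ![p, a, c] := by
  have hpower : dist a p * dist d p = dist b p * dist c p :=
    mul_dist_eq_mul_dist_of_cospherical (hcosph.subset (by grind))
      hapd.wbtw.mem_affineSpan hbpc.wbtw.mem_affineSpan
  have hvert : ∠ b p d = ∠ a p c := by
    rw [angle_eq_angle_of_angle_eq_pi_of_angle_eq_pi hbpc.angle₁₂₃_eq_pi hapd.angle₃₂₁_eq_pi,
      angle_comm]
  have hap : dist a p ≠ 0 := dist_ne_zero.2 hapd.left_ne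
  have hbp : dist b p ≠ 0 := dist_ne_zero.2 hbpc.left_ne
  have hbd : dist b d = dist b p / dist a p * dist a c :=
    dist_mul_of_eq_angle_of_dist_mul a p c b p d _ hvert (by field_simp)
      (by field_simp; linarith)
  refine similar_of_side_side (by rwa [dist_comm]) (by rwa [dist_comm]) ?_ ?_
  · rw [hbd, dist_comm p b, dist_comm p a]
    field_simp
  · rw [dist_comm p b, dist_comm p a]
    linarith

theorem angle_add_angle_eq_pi_of_cospherical_of_sOppSide {a b c d : P}
    (hcosph : Cospherical ({a, b, c, d} : Set P)) (hopp : line[ℝ, b, c].SOppSide a d) :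
    ∠ d b a + ∠ d c a = Real.pi := by
  obtain ⟨p, hapd, hbpc⟩ := exists_sbtw_sbtw_of_cospherical_of_sOppSide hcosph hopp
  have hpbd : ∠ p b d = ∠ p a c :=
    (similar_of_cospherical_of_sbtw_of_sbtw hcosph hapd hbpc).angle_eq
  have hpba : ∠ p b a = ∠ p d c :=
    (similar_of_cospherical_of_sbtw_of_sbtw (hcosph.subset (by grind)) hapd.symm hbpc).angle_eq
  have hac : a ≠ c := by
    rintro rfl
    exact hopp.left_notMem (right_mem_affineSpan_pair ℝ b a)
  calc ∠ d b a + ∠ d c a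
      = (∠ d b p + ∠ p b a) + ∠ d c a := by rw [angle_add_angle_eq_of_sbtw hapd.symm]
    _ = ∠ d a c + ∠ c d a + ∠ a c d := by
      rw [angle_comm d b p, hpbd, hpba, hapd.angle_eq_left, hapd.symm.angle_eq_left,
        angle_comm a d c, angle_comm d c a]
    _ = Real.pi := by
      linarith [angle_add_angle_add_angle_eq_pi d hac.symm]

lemma cospherical_of_dist_circumcenter_eq_circumradius {a b c d : P}
    (h : AffineIndependent ℝ ![a, b, c])
    (hd : dist d (⟨![a, b, c], h⟩ : Affine.Triangle ℝ P).circumcenter =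
      (⟨![a, b, c], h⟩ : Affine.Triangle ℝ P).circumradius) :
    Cospherical ({a, b, c, d} : Set P) := by
  let T : Affine.Triangle ℝ P := ⟨![a, b, c], h⟩
  refine T.circumsphere.cospherical.subset ?_
  rintro _ (rfl | rfl | rfl | rfl)
  exacts [T.mem_circumsphere 0, T.mem_circumsphere 1, T.mem_circumsphere 2, hd]

theorem stmt0_general {A B C B' C' D : P} (hcosph : Cospherical ({A, B, C, D} : Set P))
    (hB' : B' ∈ line[ℝ, A, B]) (hC' : C' ∈ line[ℝ, A, C]) (hdist : dist B B' = dist C C')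
    (hopp : line[ℝ, B, C].SOppSide B' C') (hDBC : dist D B = dist D C)
    (hDopp : line[ℝ, B, C].SOppSide D A) :
    dist D B' = dist D C' := by
  have hsupp : ∠ D B A + ∠ D C A = Real.pi :=
    angle_add_angle_eq_pi_of_cospherical_of_sOppSide hcosph hDopp.symm
  have hangle : ∠ D B B' = ∠ D C C' :=
    angle_eq_angle_of_sOppSide hDopp.right_notMem (left_mem_affineSpan_pair ℝ B C)
      (right_mem_affineSpan_pair ℝ B C) hB' hC' hopp hsupp
  exact (side_angle_side hangle hDBC hdist).dist_eq 0 2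

end Euclidean

theorem stmt0 (A B C B' C' D : Pt)
    (hABC : AffineIndependent ℝ ![A, B, C])
    (hB' : B' ∈ affineSpan ℝ ({A, B} : Set Pt))
    (hC' : C' ∈ affineSpan ℝ ({A, C} : Set Pt))
    (hdist : dist B B' = dist C C')
    (hopp : (affineSpan ℝ ({B, C} : Set Pt)).SOppSide B' C')
    (hDcirc : dist D (circumcenter3 A B C hABC) = circumradius3 A B C hABC)
    (hDBC : dist D B = dist D C)
    (hDopp : (affineSpan ℝ ({B, C} : Set Pt)).SOppSide D A) :
    dist D B' = dist D C' := by
  exact stmt0_general (cospherical_of_dist_circumcenter_eq_circumradius hABC hDcirc)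
    hB' hC' hdist hopp hDBC hDopp

end
end

section
/- Let ABC be a triangle, P any point, and let A_P, B_P, C_P, A', B', C', A1, A2, B1, B2, C1, C2 be as in the pedal configuration for a parameter x > 0, with A', B', C' affinely independent and orthocenter H'. Suppose Q1 is a point whose reflections in lines B'C', C'A', A'B' are A1, B1, C1 respectively, and Q2 is a point whose reflections in lines B'C', C'A', A'B' are A2, B2, C2 respectively. Then dist(H',Q1) = dist(H',Q2). -/
open EuclideanGeometry

noncomputable section

/-!
Let `a`, `b`, `c` be the unit vectors along `BC`, `CA`, `AB` and put `p = P - I`. Seen from the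
midpoint `O` of `PI`, the pedal of `P` on the line through `I` with direction `u` is half the
mirror image of `p` in `u`. Hence `O` is the circumcenter of `A'B'C'`, and the reflection `K` of
`H'` in `B'C'`, seen from `O`, is the mirror image of `A' - O` in `B' - C'`. The bisectors at
`A`, `B`, `C` have directions `b - c`, `c - a`, `a - b`; in complex coordinates the reflection in
`u - v` with `u`, `v` unimodular is `z ↦ -u v conj z`, so `K` comes out as the pedal of `P` on the
parallel to `BC` through `I`. Thus `K` and `P` have the same pedal on `BC`, which makes `K`
equidistant from `A1` and `A2`, and reflecting back in `B'C'` gives `H'Q1 = H'Q2`.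
-/

section PlaneReflections

open scoped ComplexConjugate

theorem reflection_span_singleton_eq_div_conj_mul_conj {u : ℂ} (hu : u ≠ 0) (z : ℂ) :
    (ℝ ∙ u).reflection z = u / conj u * conj z := by
  have hnorm : ((‖u‖ : ℝ) : ℂ) ^ 2 = u * conj u := (Complex.mul_conj' u).symm
  have hinner : ((inner ℝ u z : ℝ) : ℂ) = (u * conj z + conj u * z) / 2 := by
    rw [Complex.inner, Complex.re_eq_add_conj]
    simp only [map_mul, Complex.conj_conj]
    ring
  have hu' : conj u ≠ 0 := (map_ne_zero _).2 hu
  rw [Submodule.reflection_singleton_apply, nsmul_eq_mul, Complex.real_smul,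
    RCLike.ofReal_real_eq_id, id_eq, Complex.ofReal_div, Complex.ofReal_pow, hnorm, hinner]
  field_simp
  ring

theorem reflection_span_sub_of_norm_eq_one {u v : ℂ} (hu : ‖u‖ = 1) (hv : ‖v‖ = 1)
    (huv : u ≠ v) (z : ℂ) : (ℝ ∙ (u - v)).reflection z = -(u * v) * conj z := by
  have hu0 : u ≠ 0 := norm_ne_zero_iff.1 (by simp [hu])
  have hv0 : v ≠ 0 := norm_ne_zero_iff.1 (by simp [hv])
  have huv' : v - u ≠ 0 := sub_ne_zero.2 huv.symm
  rw [reflection_span_singleton_eq_div_conj_mul_conj (sub_ne_zero.2 huv), map_sub,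
    ← Complex.inv_eq_conj hu, ← Complex.inv_eq_conj hv]
  field_simp
  ring

theorem complex_reflection_span_sub_reflection {a b c p : ℂ}
    (ha : ‖a‖ = 1) (hb : ‖b‖ = 1) (hc : ‖c‖ = 1) (hab : a ≠ b) (hbc : b ≠ c) (hca : c ≠ a)
    (hp : p ≠ 0) :
    (ℝ ∙ ((ℝ ∙ (c - a)).reflection p - (ℝ ∙ (a - b)).reflection p)).reflection
      ((ℝ ∙ (b - c)).reflection p) = (ℝ ∙ a).reflection p := by
  have ha0 : a ≠ 0 := norm_ne_zero_iff.1 (by simp [ha])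
  have hb0 : b ≠ 0 := norm_ne_zero_iff.1 (by simp [hb])
  have hc0 : c ≠ 0 := norm_ne_zero_iff.1 (by simp [hc])
  have hp' : conj p ≠ 0 := (map_ne_zero _).2 hp
  have hcb : c - b ≠ 0 := sub_ne_zero.2 hbc.symm
  have hchord : -(c * a) * conj p - -(a * b) * conj p = a * conj p * (b - c) := by ring
  have hchord0 : a * conj p * (b - c) ≠ 0 := mul_ne_zero (mul_ne_zero ha0 hp') (sub_ne_zero.2 hbc)
  rw [reflection_span_sub_of_norm_eq_one hc ha hca, reflection_span_sub_of_norm_eq_one ha hb hab,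
    reflection_span_sub_of_norm_eq_one hb hc hbc, hchord,
    reflection_span_singleton_eq_div_conj_mul_conj hchord0,
    reflection_span_singleton_eq_div_conj_mul_conj ha0]
  simp only [map_mul, map_neg, map_sub, Complex.conj_conj, ← Complex.inv_eq_conj ha,
    ← Complex.inv_eq_conj hb, ← Complex.inv_eq_conj hc]
  field_simp
  ring

theorem map_reflection_span_singleton {V W : Type*} [NormedAddCommGroup V]
    [InnerProductSpace ℝ V] [NormedAddCommGroup W] [InnerProductSpace ℝ W] (f : V ≃ₗᵢ[ℝ] W)
    (u v : V) : f ((ℝ ∙ u).reflection v) = (ℝ ∙ f u).reflection (f v) := by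
  simp [Submodule.reflection_singleton_apply, f.map_smul]

theorem reflection_span_sub_reflection {V : Type*} [NormedAddCommGroup V]
    [InnerProductSpace ℝ V] (hV : Module.finrank ℝ V = 2) {a b c p : V}
    (ha : ‖a‖ = 1) (hb : ‖b‖ = 1) (hc : ‖c‖ = 1) (hab : a ≠ b) (hbc : b ≠ c) (hca : c ≠ a)
    (hp : p ≠ 0) :
    (ℝ ∙ ((ℝ ∙ (c - a)).reflection p - (ℝ ∙ (a - b)).reflection p)).reflection
      ((ℝ ∙ (b - c)).reflection p) = (ℝ ∙ a).reflection p := by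
  have : FiniteDimensional ℝ V := .of_finrank_pos (by lia)
  let f : V ≃ₗᵢ[ℝ] ℂ := (Complex.isometryOfOrthonormal
    ((stdOrthonormalBasis ℝ V).reindex (finCongr hV))).symm
  apply f.injective
  simp only [map_reflection_span_singleton f, map_sub]
  exact complex_reflection_span_sub_reflection (by simpa) (by simpa) (by simpa) (f.injective.ne hab)
    (f.injective.ne hbc) (f.injective.ne hca) (by simpa)

end PlaneReflections

section PedalTriangle

variable {V P : Type*} [NormedAddCommGroup V] [InnerProductSpace ℝ V] [MetricSpace P]
  [NormedAddTorsor V P]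

theorem orthogonalProjection_vsub_midpoint (s : AffineSubspace ℝ P) [Nonempty s]
    [s.direction.HasOrthogonalProjection] (p : P) {q : P} (hq : q ∈ s) :
    (orthogonalProjection s p : P) -ᵥ midpoint ℝ p q =
      (2⁻¹ : ℝ) • s.direction.reflection (p -ᵥ q) := by
  rw [orthogonalProjection_apply_mem _ hq, vadd_vsub_assoc, right_vsub_midpoint,
    ← neg_vsub_eq_vsub_rev p q, Submodule.reflection_apply,
    Submodule.coe_orthogonalProjectionOnto_apply, invOf_eq_inv]
  module

theorem dist_orthogonalProjection_midpoint (s : AffineSubspace ℝ P) [Nonempty s]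
    [s.direction.HasOrthogonalProjection] (p : P) {q : P} (hq : q ∈ s) :
    dist (orthogonalProjection s p : P) (midpoint ℝ p q) = dist p q / 2 := by
  rw [dist_eq_norm_vsub V, orthogonalProjection_vsub_midpoint s p hq, norm_smul,
    LinearIsometryEquiv.norm_map, ← dist_eq_norm_vsub, Real.norm_of_nonneg (by positivity)]
  ring

theorem reflection_line_orthocenter_vsub_circumcenter (t : Affine.Triangle ℝ P) :
    reflection line[ℝ, t.points 1, t.points 2] t.orthocenter -ᵥ t.circumcenter =
      (ℝ ∙ (t.points 1 -ᵥ t.points 2)).reflection (t.points 0 -ᵥ t.circumcenter) := by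
  set O := t.circumcenter
  have hsum : t.orthocenter -ᵥ t.points 2 = (t.points 0 -ᵥ O) + (t.points 1 -ᵥ O) := by
    rw [← vsub_sub_vsub_cancel_right _ _ O, t.orthocenter_vsub_circumcenter_eq_sum_vsub,
      Fin.sum_univ_three]
    abel
  have hradii : ‖t.points 1 -ᵥ O‖ = ‖t.points 2 -ᵥ O‖ := by
    simp only [← dist_eq_norm_vsub, O, Affine.Simplex.dist_circumcenter_eq_circumradius]
  have hswap : (ℝ ∙ (t.points 1 -ᵥ t.points 2)).reflection (t.points 1 -ᵥ O) =
      -(t.points 2 -ᵥ O) := by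
    rw [eq_neg_iff_add_eq_zero, add_eq_zero_iff_neg_eq, ← Submodule.reflection_orthogonal_apply]
    simpa only [vsub_sub_vsub_cancel_right] using Submodule.reflection_sub hradii
  rw [reflection_apply_of_mem _ _ (right_mem_affineSpan_pair ℝ _ _), hsum]
  simp only [direction_affineSpan, vectorSpan_pair, map_add, hswap, vadd_vsub_assoc]
  abel

theorem circumcenter_eq_of_forall_dist_eq [FiniteDimensional ℝ V] {n : ℕ}
    (hn : n = Module.finrank ℝ V) (s : Affine.Simplex ℝ P n) {p : P} {r : ℝ}
    (hr : ∀ i, dist (s.points i) p = r) : s.circumcenter = p := by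
  have htop : affineSpan ℝ (Set.range s.points) = ⊤ :=
    s.independent.affineSpan_eq_top_iff_card_eq_finrank_add_one.2 (by simp [hn])
  exact (s.eq_circumcenter_of_dist_eq (htop ▸ AffineSubspace.mem_top ℝ V p) hr).symm

theorem circumcenter_eq_midpoint_of_forall_orthogonalProjection [FiniteDimensional ℝ V] {n : ℕ}
    (hn : n = Module.finrank ℝ V) (s : Affine.Simplex ℝ P n) {o p : P}
    {K : Fin (n + 1) → Submodule ℝ V}
    (hs : ∀ i, s.points i = orthogonalProjection (AffineSubspace.mk' o (K i)) p) :
    s.circumcenter = midpoint ℝ p o :=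
  circumcenter_eq_of_forall_dist_eq hn s fun i => by
    rw [hs i, dist_orthogonalProjection_midpoint _ p (AffineSubspace.self_mem_mk' o _)]

theorem reflection_orthocenter_of_orthogonalProjection_bisectors
    [FiniteDimensional ℝ V] (hV : Module.finrank ℝ V = 2) {a b c : V}
    (ha : ‖a‖ = 1) (hb : ‖b‖ = 1) (hc : ‖c‖ = 1) (hab : a ≠ b) (hbc : b ≠ c) (hca : c ≠ a)
    {o p : P} (t : Affine.Triangle ℝ P)
    (ht : ∀ i, t.points i =
      orthogonalProjection (AffineSubspace.mk' o (ℝ ∙ ![b - c, c - a, a - b] i)) p) :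
    reflection line[ℝ, t.points 1, t.points 2] t.orthocenter =
      orthogonalProjection (AffineSubspace.mk' o (ℝ ∙ a)) p := by
  have hfoot (u : V) : (orthogonalProjection (AffineSubspace.mk' o (ℝ ∙ u)) p : P) -ᵥ
      midpoint ℝ p o = (2⁻¹ : ℝ) • (ℝ ∙ u).reflection (p -ᵥ o) := by
    rw [orthogonalProjection_vsub_midpoint _ p (AffineSubspace.self_mem_mk' o _)]
    simp only [AffineSubspace.direction_mk']
  have hcirc : t.circumcenter = midpoint ℝ p o :=
    circumcenter_eq_midpoint_of_forall_orthogonalProjection hV.symm t ht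
  have hvertex (i : Fin 3) : t.points i -ᵥ midpoint ℝ p o =
      (2⁻¹ : ℝ) • (ℝ ∙ ![b - c, c - a, a - b] i).reflection (p -ᵥ o) := by
    rw [ht i, hfoot]
  have hpo : p -ᵥ o ≠ 0 := by
    intro h
    refine t.independent.injective.ne (show (1 : Fin 3) ≠ 2 by decide) ?_
    apply vsub_left_cancel (p := midpoint ℝ p o)
    rw [hvertex 1, hvertex 2, h, map_zero, map_zero]
  have hside : ℝ ∙ (t.points 1 -ᵥ t.points 2) =
      ℝ ∙ ((ℝ ∙ (c - a)).reflection (p -ᵥ o) - (ℝ ∙ (a - b)).reflection (p -ᵥ o)) := by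
    rw [← vsub_sub_vsub_cancel_right _ _ (midpoint ℝ p o), hvertex 1, hvertex 2, ← smul_sub,
      Submodule.span_singleton_smul_eq (by norm_num)]
    rfl
  apply vsub_left_cancel (p := midpoint ℝ p o)
  rw [hfoot, ← hcirc, reflection_line_orthocenter_vsub_circumcenter, hcirc, hvertex 0, map_smul]
  simp only [hside]
  exact congrArg _ (reflection_span_sub_reflection hV ha hb hc hab hbc hca hpo)

theorem orthogonalProjection_orthogonalProjection_of_direction_eq
    {s₁ s₂ : AffineSubspace ℝ P} [Nonempty s₁] [Nonempty s₂]
    [s₁.direction.HasOrthogonalProjection] [s₂.direction.HasOrthogonalProjection]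
    (h : s₁.direction = s₂.direction) (p : P) :
    orthogonalProjection s₂ (orthogonalProjection s₁ p) = orthogonalProjection s₂ p :=
  orthogonalProjection_eq_orthogonalProjection_iff_vsub_mem.2
    (h ▸ orthogonalProjection_vsub_mem_direction_orthogonal s₁ p)

theorem mem_of_sameRay_vsub {s : AffineSubspace ℝ P} {p q r : P} (hp : p ∈ s) (hq : q ∈ s)
    (hpq : p ≠ q) (h : SameRay ℝ (q -ᵥ p) (r -ᵥ p)) : r ∈ s := by
  obtain ⟨k, -, hk⟩ := h.exists_nonneg_left (vsub_ne_zero.2 hpq.symm)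
  rw [← vsub_vadd r p, ← hk]
  exact s.smul_vsub_vadd_mem k hq hp hp

theorem direction_line_eq_span_normalize {A B : P} (hAB : A ≠ B) :
    line[ℝ, A, B].direction = ℝ ∙ NormedSpace.normalize (B -ᵥ A) := by
  have hscale : ‖B -ᵥ A‖⁻¹ ≠ 0 := inv_ne_zero (norm_ne_zero_iff.2 (vsub_ne_zero.2 hAB.symm))
  rw [direction_affineSpan, vectorSpan_pair_rev, NormedSpace.normalize,
    Submodule.span_singleton_smul_eq hscale.isUnit]

theorem normalize_vsub_ne_normalize_vsub_of_affineIndependent {A B C : P}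
    (h : AffineIndependent ℝ ![A, B, C]) :
    NormedSpace.normalize (B -ᵥ A) ≠ NormedSpace.normalize (C -ᵥ B) := by
  intro heq
  have hray : SameRay ℝ (B -ᵥ A) (C -ᵥ B) := sameRay_iff_inv_norm_smul_eq.2 (.inr (.inr heq))
  exact affineIndependent_iff_not_collinear_set.1 h (wbtw_iff_sameRay_vsub.2 hray).collinear

end PedalTriangle

section Incenter

open NormedSpace (normalize)

theorem incenter3_rotate (A B C : Pt) : incenter3 B C A = incenter3 A B C := by
  unfold incenter3
  rw [show dist C A + dist A B + dist B C = dist B C + dist C A + dist A B by ring]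
  congr 1
  abel

theorem vsub_incenter3 {A B C : Pt} (hAB : A ≠ B) :
    A -ᵥ incenter3 A B C =
      (dist C A * dist A B / (dist B C + dist C A + dist A B)) •
        (normalize (A -ᵥ C) - normalize (B -ᵥ A)) := by
  have hperimeter : dist B C + dist C A + dist A B ≠ 0 := by
    have := dist_pos.2 hAB
    positivity
  have hAC : A - C = dist C A • normalize (A -ᵥ C) := by
    rw [dist_comm, dist_eq_norm_vsub, NormedSpace.norm_smul_normalize, vsub_eq_sub]
  have hBA : B - A = dist A B • normalize (B -ᵥ A) := by
    rw [dist_comm, dist_eq_norm_vsub, NormedSpace.norm_smul_normalize, vsub_eq_sub]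
  calc A -ᵥ incenter3 A B C
      = (dist B C + dist C A + dist A B)⁻¹ • (dist A B • (A - C) - dist C A • (B - A)) := by
        rw [incenter3, vsub_eq_sub, eq_inv_smul_iff₀ hperimeter, smul_sub,
          smul_inv_smul₀ hperimeter]
        module
    _ = _ := by
        rw [hAC, hBA]
        module

theorem line_incenter3 {A B C : Pt} (hAB : A ≠ B) (hCA : C ≠ A) :
    line[ℝ, A, incenter3 A B C] =
      AffineSubspace.mk' (incenter3 A B C) (ℝ ∙ (normalize (A -ᵥ C) - normalize (B -ᵥ A))) := by
  have hscale : dist C A * dist A B / (dist B C + dist C A + dist A B) ≠ 0 := by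
    have := dist_pos.2 hAB
    have := dist_pos.2 hCA
    positivity
  rw [← AffineSubspace.mk'_eq (right_mem_affineSpan_pair ℝ A (incenter3 A B C)),
    direction_affineSpan, vectorSpan_pair, vsub_incenter3 hAB,
    Submodule.span_singleton_smul_eq hscale.isUnit]

theorem pedal_incenter3 {A B C : Pt} (hAB : A ≠ B) (hCA : C ≠ A) (P : Pt) :
    pedal P A (incenter3 A B C) =
      orthogonalProjection (AffineSubspace.mk' (incenter3 A B C)
        (ℝ ∙ (normalize (A -ᵥ C) - normalize (B -ᵥ A)))) P := by
  simp only [pedal, line_incenter3 hAB hCA]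

theorem lineReflect_orthocenter3_pedal_incenter3 {A B C : Pt}
    (hABC : AffineIndependent ℝ ![A, B, C]) (P : Pt)
    (h : AffineIndependent ℝ ![pedal P A (incenter3 A B C), pedal P B (incenter3 A B C),
      pedal P C (incenter3 A B C)]) :
    lineReflect (pedal P B (incenter3 A B C)) (pedal P C (incenter3 A B C))
        (orthocenter3 _ _ _ h) =
      orthogonalProjection
        (AffineSubspace.mk' (incenter3 A B C) line[ℝ, B, C].direction) P := by
  have hBCA : AffineIndependent ℝ ![B, C, A] := hABC.comm_left.comm_right
  have hCAB : AffineIndependent ℝ ![C, A, B] := hBCA.comm_left.comm_right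
  have hAB : A ≠ B := hABC.injective.ne (show (0 : Fin 3) ≠ 1 by decide)
  have hBC : B ≠ C := hBCA.injective.ne (show (0 : Fin 3) ≠ 1 by decide)
  have hCA : C ≠ A := hCAB.injective.ne (show (0 : Fin 3) ≠ 1 by decide)
  have hA : pedal P A (incenter3 A B C) = _ := pedal_incenter3 hAB hCA P
  have hB : pedal P B (incenter3 B C A) = _ := pedal_incenter3 hBC hAB P
  have hC : pedal P C (incenter3 C A B) = _ := pedal_incenter3 hCA hBC P
  rw [incenter3_rotate A B C] at hB
  rw [incenter3_rotate B C A, incenter3_rotate A B C] at hC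
  simp only [direction_line_eq_span_normalize hBC]
  exact reflection_orthocenter_of_orthogonalProjection_bisectors finrank_euclideanSpace_fin
    (NormedSpace.norm_normalize (vsub_ne_zero.2 hBC.symm))
    (NormedSpace.norm_normalize (vsub_ne_zero.2 hCA.symm))
    (NormedSpace.norm_normalize (vsub_ne_zero.2 hAB.symm))
    (normalize_vsub_ne_normalize_vsub_of_affineIndependent hBCA)
    (normalize_vsub_ne_normalize_vsub_of_affineIndependent hCAB)
    (normalize_vsub_ne_normalize_vsub_of_affineIndependent hABC)
    ⟨_, h⟩ (Fin.forall_fin_succ.2 ⟨hA, Fin.forall_fin_two.2 ⟨hB, hC⟩⟩)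

theorem stmt5_general {A B C P A1 A2 Q1 Q2 : Pt} (hABC : AffineIndependent ℝ ![A, B, C])
    (hA1 : A1 ∈ line[ℝ, B, C]) (hA2 : A2 ∈ line[ℝ, B, C])
    (hdist : dist (pedal P B C) A1 = dist (pedal P B C) A2)
    (h : AffineIndependent ℝ ![pedal P A (incenter3 A B C), pedal P B (incenter3 A B C),
      pedal P C (incenter3 A B C)])
    (hQ1 : lineReflect (pedal P B (incenter3 A B C)) (pedal P C (incenter3 A B C)) Q1 = A1)
    (hQ2 : lineReflect (pedal P B (incenter3 A B C)) (pedal P C (incenter3 A B C)) Q2 = A2) :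
    dist (orthocenter3 _ _ _ h) Q1 = dist (orthocenter3 _ _ _ h) Q2 := by
  set H := orthocenter3 _ _ _ h
  set r := lineReflect (pedal P B (incenter3 A B C)) (pedal P C (incenter3 A B C))
  have hr (X Y : Pt) : dist (r X) (r Y) = dist X Y := (reflection _).dist_map X Y
  have hK : r H = orthogonalProjection
      (AffineSubspace.mk' (incenter3 A B C) line[ℝ, B, C].direction) P :=
    lineReflect_orthocenter3_pedal_incenter3 hABC P h
  have hfoot : (orthogonalProjection line[ℝ, B, C] (r H) : Pt) = pedal P B C := by
    rw [hK, orthogonalProjection_orthogonalProjection_of_direction_eq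
      (AffineSubspace.direction_mk' _ _), pedal]
  have hequidistant : dist A1 (r H) = dist A2 (r H) := by
    rwa [dist_eq_iff_dist_orthogonalProjection_eq (r H) hA1 hA2, hfoot, dist_comm A1, dist_comm A2]
  rw [← hr H Q1, ← hr H Q2, hQ1, hQ2, dist_comm, hequidistant, dist_comm]

end Incenter

theorem stmt5 (A B C I P AP BP CP A' B' C' A1 A2 B1 B2 C1 C2 H' Q1 Q2 : Pt) (x : ℝ)
    (hABC : AffineIndependent ℝ ![A, B, C])
    (hI : I = incenter3 A B C)
    (hAP : AP = pedal P B C) (hBP : BP = pedal P C A) (hCP : CP = pedal P A B)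
    (hA' : A' = pedal P A I) (hB' : B' = pedal P B I) (hC' : C' = pedal P C I)
    (hAPB : AP ≠ B) (hAPC : AP ≠ C) (hBPC : BP ≠ C) (hBPA : BP ≠ A)
    (hCPA : CP ≠ A) (hCPB : CP ≠ B)
    (hx : 0 < x)
    (hA1 : SameRay ℝ (C -ᵥ AP) (A1 -ᵥ AP))
    (hB1 : SameRay ℝ (A -ᵥ BP) (B1 -ᵥ BP))
    (hC1 : SameRay ℝ (B -ᵥ CP) (C1 -ᵥ CP))
    (hA2 : SameRay ℝ (B -ᵥ AP) (A2 -ᵥ AP))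
    (hB2 : SameRay ℝ (C -ᵥ BP) (B2 -ᵥ BP))
    (hC2 : SameRay ℝ (A -ᵥ CP) (C2 -ᵥ CP))
    (hdA1 : dist AP A1 = x) (hdA2 : dist AP A2 = x)
    (hdB1 : dist BP B1 = x) (hdB2 : dist BP B2 = x)
    (hdC1 : dist CP C1 = x) (hdC2 : dist CP C2 = x)

    (hA'B'C' : AffineIndependent ℝ ![A', B', C'])
    (hH' : H' = orthocenter3 A' B' C' hA'B'C')
    (hQ1a : lineReflect B' C' Q1 = A1) (hQ1b : lineReflect C' A' Q1 = B1)
    (hQ1c : lineReflect A' B' Q1 = C1)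
    (hQ2a : lineReflect B' C' Q2 = A2) (hQ2b : lineReflect C' A' Q2 = B2)
    (hQ2c : lineReflect A' B' Q2 = C2) :
    dist H' Q1 = dist H' Q2 := by
  subst hI hAP hA' hB' hC' hH'
  exact stmt5_general hABC
    (mem_of_sameRay_vsub (orthogonalProjection_mem P) (right_mem_affineSpan_pair ℝ B C) hAPC hA1)
    (mem_of_sameRay_vsub (orthogonalProjection_mem P) (left_mem_affineSpan_pair ℝ B C) hAPB hA2)
    (hdA1.trans hdA2.symm) hA'B'C' hQ1a hQ2a

end
end

section
/- Let ABC be a triangle with circumcenter O and orthocenter H, and assume H ∉ {A, B, C}. Let A*, B*, C* be the pedals of O on lines AH, BH, CH, and assume A*, B*, C* are affinely independent with circumcenter N* and orthocenter H*. Then each of the reflections of O in the lines B*C*, C*A*, A*B* is collinear with N* and H*; that is, the Steiner line of O with respect to triangle A*B*C* is the Euler line of A*B*C*. -/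
open EuclideanGeometry

noncomputable section

/-!
Identify the plane with `ℂ`, with the origin at `O`; the vertices `a`, `b`, `c` have a common
modulus `r`, and `h = a + b + c` represents `H`. Each of `A*`, `B*`, `C*` sees the segment `OH` at a
right angle, so `N*` is the midpoint of `OH` and the circumradius of `A*B*C*` is `|h| / 2`. Moreover
`a* - n* = -κ * conj a` for a constant `κ = a * b * c * conj h / (2 * r ^ 4)` symmetric in the
vertices, so an indirect similarity carries `ABC` to `A*B*C*`, and `h* - n* = -κ * conj h`.

The anti-Steiner point `q` of the Euler line of a triangle is characterised by
`h * q * r ^ 2 = a * b * c * conj h`: the reflection of `q` in a side `ab` is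
`a + b - a * b * conj q / r ^ 2`, which this equation makes a real multiple of `h`. The point `O`
satisfies it relative to `A*B*C*`.
-/

section

open Affine ComplexConjugate Module

theorem complex_reflection_span_singleton {w : ℂ} (hw : w ≠ 0) (z : ℂ) :
    (ℝ ∙ w).reflection z = w * conj z / conj w := by
  have hcw : conj w ≠ 0 := (map_ne_zero _).2 hw
  have hnorm : ((‖w‖ ^ 2 : ℝ) : ℂ) = w * conj w := by
    rw [Complex.mul_conj', Complex.ofReal_pow]
  rw [Submodule.reflection_singleton_apply, Complex.inner, Complex.real_smul, nsmul_eq_mul,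
    Complex.ofReal_div, RCLike.ofReal_real_eq_id, id, hnorm, Complex.re_eq_add_conj, map_mul,
    Complex.conj_conj]
  push_cast
  field_simp
  ring

theorem add_div_conj_add_of_norm_eq {b c : ℂ} {r : ℝ} (hb : ‖b‖ = r) (hc : ‖c‖ = r)
    (hbc : b + c ≠ 0) : (b + c) / conj (b + c) = b * c / r ^ 2 := by
  have hr : (r : ℂ) ≠ 0 := by
    refine Complex.ofReal_ne_zero.2 fun hr ↦ hbc ?_
    rw [norm_eq_zero.1 (hb.trans hr), norm_eq_zero.1 (hc.trans hr), add_zero]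
  have hbb : b * conj b = r ^ 2 := by rw [Complex.mul_conj', hb]
  have hcc : c * conj c = r ^ 2 := by rw [Complex.mul_conj', hc]
  rw [div_eq_div_iff ((map_ne_zero _).2 hbc) (pow_ne_zero 2 hr), map_add]
  linear_combination -c * hbb - b * hcc

theorem euler_reflection_eq_of_indirect_similarity {p h κ : ℂ} {r : ℝ} (hr : r ≠ 0)
    (hp : ‖p‖ = r ^ 3) (hκ : κ = p * conj h / (2 * r ^ 4)) :
    -κ * conj h * -(h / 2) * ((‖h‖ / 2 : ℝ) : ℂ) ^ 2 =
      (-κ) ^ 3 * conj p * conj (-κ * conj h) := by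
  have hr' : (r : ℂ) ≠ 0 := Complex.ofReal_ne_zero.2 hr
  have hpp : p * conj p = r ^ 6 := by rw [Complex.mul_conj', hp]; push_cast; ring
  have hhh : ((‖h‖ / 2 : ℝ) : ℂ) ^ 2 = h * conj h / 4 := by
    rw [Complex.mul_conj']; push_cast; ring
  have hκp : κ ^ 2 * conj p = κ * r ^ 2 * conj h / 2 := by
    rw [hκ]
    field_simp
    linear_combination p * conj h ^ 2 * hpp
  have hκκ : κ * conj κ = h * conj h / (4 * r ^ 2) := by
    rw [hκ]
    simp only [map_div₀, map_mul, map_pow, Complex.conj_conj, Complex.conj_ofReal, map_ofNat]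
    field_simp
    linear_combination hpp * (h * conj h * 4)
  simp only [map_mul, map_neg, Complex.conj_conj]
  calc -κ * conj h * -(h / 2) * ((‖h‖ / 2 : ℝ) : ℂ) ^ 2
      = (κ * r ^ 2 * conj h / 2) * (h * conj h / (4 * r ^ 2)) * h := by
        rw [hhh]; field_simp
    _ = (-κ) ^ 3 * conj p * (-conj κ * h) := by rw [← hκp, ← hκκ]; ring

@[to_additive]
theorem prod_univ_eq_mul_mul_of_ne {M : Type*} [CommMonoid M] (f : Fin 3 → M) {i j k : Fin 3}
    (hij : i ≠ j) (hik : i ≠ k) (hjk : j ≠ k) : ∏ l, f l = f i * f j * f k := by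
  have huniv : (Finset.univ : Finset (Fin 3)) = {i, j, k} := by decide +revert
  rw [huniv, Finset.prod_insert (by simp [hij, hik]), Finset.prod_pair hjk, mul_assoc]

theorem exists_fin_three_ne_and_ne (i j : Fin 3) : ∃ k, i ≠ k ∧ j ≠ k := by
  decide +revert

variable {V P : Type*} [NormedAddCommGroup V] [InnerProductSpace ℝ V] [MetricSpace P]
  [NormedAddTorsor V P]

theorem circumsphere_eq_of_forall_mem [FiniteDimensional ℝ V] {n : ℕ} (hn : finrank ℝ V = n)
    (S : Simplex ℝ P n) {s : Sphere P} (hs : ∀ i, S.points i ∈ s) : S.circumsphere = s := by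
  have hspan : affineSpan ℝ (Set.range S.points) = ⊤ :=
    S.independent.affineSpan_eq_top_iff_card_eq_finrank_add_one.2 (by simp [hn])
  refine (S.circumsphere_unique_dist_eq.2 s ⟨?_, Set.range_subset_iff.2 hs⟩).symm
  rw [hspan]
  exact AffineSubspace.mem_top ℝ V _

theorem orthogonalProjection_mem_ofDiameter (X O H : P) :
    (orthogonalProjection line[ℝ, X, H] O : P) ∈ Sphere.ofDiameter O H :=
  Sphere.angle_eq_pi_div_two_iff_mem_sphere_ofDiameter.1 <|
    angle_self_orthogonalProjection O (right_mem_affineSpan_pair ℝ X H)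

theorem orthogonalProjection_eq_midpoint_reflection (s : AffineSubspace ℝ P) [Nonempty s]
    [s.direction.HasOrthogonalProjection] (X : P) :
    (orthogonalProjection s X : P) = midpoint ℝ X (reflection s X) := by
  rw [reflection_apply', eq_comm, midpoint_eq_iff']
  rfl

variable (e : V ≃ₗᵢ[ℝ] ℂ)

theorem map_vsub_eq_sub (X Y O : P) : e (X -ᵥ Y) = e (X -ᵥ O) - e (Y -ᵥ O) := by
  rw [← map_sub, vsub_sub_vsub_cancel_right]

theorem map_reflection_vsub {X Y : P} (hXY : X ≠ Y) (O Q : P) :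
    e (reflection line[ℝ, X, Y] Q -ᵥ O) =
      e (X -ᵥ O) + e (Y -ᵥ X) * conj (e (Q -ᵥ X)) / conj (e (Y -ᵥ X)) := by
  have hw : e (Y -ᵥ X) ≠ 0 := by simpa [vsub_eq_zero_iff_eq] using hXY.symm
  have hdir : e (line[ℝ, X, Y].direction.reflection (Q -ᵥ X)) =
      (ℝ ∙ e (Y -ᵥ X)).reflection (e (Q -ᵥ X)) := by
    have := Submodule.reflection_map_apply e line[ℝ, X, Y].direction (e (Q -ᵥ X))
    rw [e.symm_apply_apply] at this
    rw [← this]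
    congr!
    simp [direction_affineSpan, vectorSpan_pair_rev, Submodule.map_span]
  rw [reflection_apply_of_mem _ _ (left_mem_affineSpan_pair ℝ X Y), vadd_vsub_assoc, map_add, hdir,
    complex_reflection_span_singleton hw, add_comm]

theorem map_reflection_chord_vsub {O X Y : P} {r : ℝ} (hX : dist X O = r) (hY : dist Y O = r)
    (hXY : X ≠ Y) (Q : P) :
    e (reflection line[ℝ, X, Y] Q -ᵥ O) =
      e (X -ᵥ O) + e (Y -ᵥ O) - e (X -ᵥ O) * e (Y -ᵥ O) * conj (e (Q -ᵥ O)) / r ^ 2 := by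
  have hx : ‖e (X -ᵥ O)‖ = r := by rw [e.norm_map, ← dist_eq_norm_vsub, hX]
  have hy : ‖e (Y -ᵥ O)‖ = r := by rw [e.norm_map, ← dist_eq_norm_vsub, hY]
  have hxx := Complex.mul_conj' (e (X -ᵥ O))
  have hyx : e (Y -ᵥ O) + -e (X -ᵥ O) ≠ 0 := by
    simpa [← sub_eq_add_neg, ← map_vsub_eq_sub, vsub_eq_zero_iff_eq] using hXY.symm
  have hr : (r : ℂ) ≠ 0 := by
    refine Complex.ofReal_ne_zero.2 fun hr ↦ hXY ?_
    rw [dist_eq_zero.1 (hX.trans hr), dist_eq_zero.1 (hY.trans hr)]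
  have hdiv := add_div_conj_add_of_norm_eq hy ((norm_neg _).trans hx) hyx
  rw [map_reflection_vsub e hXY O, map_vsub_eq_sub e Y X O, map_vsub_eq_sub e Q X O,
    mul_div_right_comm, sub_eq_add_neg (e (Y -ᵥ O)), hdiv, map_sub]
  rw [hx] at hxx
  field_simp
  linear_combination e (Y -ᵥ O) * hxx

theorem collinear_of_mul_conj_eq_ofReal {X N Y : P} {t : ℝ}
    (h : e (X -ᵥ N) * conj (e (Y -ᵥ N)) = t) : Collinear ℝ {X, N, Y} := by
  rcases eq_or_ne Y N with rfl | hY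
  · simpa using collinear_pair ℝ X Y
  have hy : e (Y -ᵥ N) ≠ 0 := by simpa [vsub_eq_zero_iff_eq] using hY
  have hX : X -ᵥ N = (t / ‖Y -ᵥ N‖ ^ 2) • (Y -ᵥ N) := by
    apply e.injective
    rw [map_smul, Complex.real_smul]
    push_cast
    rw [← e.norm_map, ← Complex.mul_conj', ← h]
    field_simp [(map_ne_zero (starRingEnd ℂ)).2 hy]
  refine (collinear_iff_of_mem (p₀ := N) (by simp)).2 ⟨Y -ᵥ N, ?_⟩
  rintro _ (rfl | rfl | rfl)
  · exact ⟨_, (eq_vadd_iff_vsub_eq _ _ _).2 hX⟩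
  · exact ⟨0, by simp⟩
  · exact ⟨1, by simp⟩

theorem norm_map_points_vsub_circumcenter (T : Triangle ℝ P) (i : Fin 3) :
    ‖e (T.points i -ᵥ T.circumcenter)‖ = T.circumradius := by
  rw [e.norm_map, ← dist_eq_norm_vsub, T.dist_circumcenter_eq_circumradius]

theorem map_points_vsub_circumcenter_mul_conj (T : Triangle ℝ P) (i : Fin 3) :
    e (T.points i -ᵥ T.circumcenter) * conj (e (T.points i -ᵥ T.circumcenter)) =
      T.circumradius ^ 2 := by
  rw [Complex.mul_conj', norm_map_points_vsub_circumcenter]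

theorem map_orthocenter_vsub_circumcenter (T : Triangle ℝ P) :
    e (T.orthocenter -ᵥ T.circumcenter) = ∑ i, e (T.points i -ᵥ T.circumcenter) := by
  rw [T.orthocenter_vsub_circumcenter_eq_sum_vsub, map_sum]

/-- `Q` is the Euler reflection point of `T`, that is, the anti-Steiner point of its Euler line.
With the origin at the circumcenter, vertices `a`, `b`, `c` of modulus `r` and `h = a + b + c`, it
is the point `q` with `h * q * r ^ 2 = a * b * c * conj h`; this is read off in the coordinate given
by the isometry `e`. The denominator-free form makes every `Q` qualify when `h = 0`, where there is
no Euler line. -/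
def IsEulerReflectionPoint (T : Triangle ℝ P) (Q : P) : Prop :=
  e (T.orthocenter -ᵥ T.circumcenter) * e (Q -ᵥ T.circumcenter) * T.circumradius ^ 2 =
    (∏ i, e (T.points i -ᵥ T.circumcenter)) * conj (e (T.orthocenter -ᵥ T.circumcenter))

variable {e} in
theorem IsEulerReflectionPoint.collinear {T : Triangle ℝ P} {Q : P}
    (hQ : IsEulerReflectionPoint e T Q) {i j : Fin 3} (hij : i ≠ j) :
    Collinear ℝ {reflection line[ℝ, T.points i, T.points j] Q, T.circumcenter, T.orthocenter} := by
  obtain ⟨k, hik, hjk⟩ := exists_fin_three_ne_and_ne i j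
  have hr : (T.circumradius : ℂ) ≠ 0 := Complex.ofReal_ne_zero.2 T.circumradius_pos.ne'
  have hmul_conj := map_points_vsub_circumcenter_mul_conj e T
  have hrefl := map_reflection_chord_vsub e (T.dist_circumcenter_eq_circumradius i)
    (T.dist_circumcenter_eq_circumradius j) (T.independent.injective.ne hij) Q
  have hsum := map_orthocenter_vsub_circumcenter e T
  have hQc := congrArg conj hQ
  rw [sum_univ_eq_add_add_of_ne _ hij hik hjk] at hsum
  rw [prod_univ_eq_mul_mul_of_ne _ hij hik hjk] at hQc
  simp only [map_mul, map_pow, Complex.conj_ofReal, Complex.conj_conj] at hQc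
  set x := e (T.points i -ᵥ T.circumcenter)
  set y := e (T.points j -ᵥ T.circumcenter)
  set z := e (T.points k -ᵥ T.circumcenter)
  set h := e (T.orthocenter -ᵥ T.circumcenter)
  set q := e (Q -ᵥ T.circumcenter)
  have hxyq : x * y * conj q / T.circumradius ^ 2 * conj h = conj z * h := by
    field_simp
    apply mul_right_cancel₀ (pow_ne_zero 2 hr)
    linear_combination x * y * hQc + y * conj y * conj z * h * hmul_conj i +
      T.circumradius ^ 2 * conj z * h * hmul_conj j
  refine collinear_of_mul_conj_eq_ofReal e (t := ‖h‖ ^ 2 - 2 * (z * conj h).re) ?_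
  rw [hrefl]
  push_cast
  rw [← Complex.mul_conj', Complex.re_eq_add_conj, map_mul, Complex.conj_conj]
  linear_combination -conj h * hsum - hxyq

theorem map_reflection_circumcenter_vsub (T : Triangle ℝ P) {i j k : Fin 3}
    (hi : T.orthocenter ≠ T.points i) (hij : i ≠ j) (hik : i ≠ k) (hjk : j ≠ k) :
    e (reflection line[ℝ, T.points i, T.orthocenter] T.circumcenter -ᵥ T.circumcenter) =
      e (T.points i -ᵥ T.circumcenter) -
        e (T.points j -ᵥ T.circumcenter) * e (T.points k -ᵥ T.circumcenter) *
          conj (e (T.points i -ᵥ T.circumcenter)) / T.circumradius ^ 2 := by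
  have hdir : e (T.orthocenter -ᵥ T.points i) =
      e (T.points j -ᵥ T.circumcenter) + e (T.points k -ᵥ T.circumcenter) := by
    rw [map_vsub_eq_sub e _ _ T.circumcenter, map_orthocenter_vsub_circumcenter,
      sum_univ_eq_add_add_of_ne _ hij hik hjk]
    ring
  have hne : e (T.orthocenter -ᵥ T.points i) ≠ 0 := by simpa [vsub_eq_zero_iff_eq] using hi
  rw [hdir] at hne
  rw [map_reflection_vsub e hi.symm, hdir, mul_div_right_comm,
    add_div_conj_add_of_norm_eq (norm_map_points_vsub_circumcenter e T j)
      (norm_map_points_vsub_circumcenter e T k) hne,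
    ← neg_vsub_eq_vsub_rev (T.points i), map_neg, map_neg]
  ring

theorem map_orthogonalProjection_vsub_midpoint (s : AffineSubspace ℝ P) [Nonempty s]
    [s.direction.HasOrthogonalProjection] (O H : P) :
    e ((orthogonalProjection s O : P) -ᵥ midpoint ℝ O H) =
      (e (reflection s O -ᵥ O) - e (H -ᵥ O)) / 2 := by
  rw [orthogonalProjection_eq_midpoint_reflection, midpoint_vsub_midpoint, vsub_self,
    ← map_vsub_eq_sub, midpoint_eq_smul_add, zero_add, map_smul, Complex.real_smul, div_eq_inv_mul]
  simp

theorem map_pedal_vsub_midpoint (T : Triangle ℝ P) {i : Fin 3} (hi : T.orthocenter ≠ T.points i) :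
    e ((orthogonalProjection line[ℝ, T.points i, T.orthocenter] T.circumcenter : P) -ᵥ
        midpoint ℝ T.circumcenter T.orthocenter) =
      -((∏ j, e (T.points j -ᵥ T.circumcenter)) * conj (e (T.orthocenter -ᵥ T.circumcenter)) /
          (2 * T.circumradius ^ 4)) * conj (e (T.points i -ᵥ T.circumcenter)) := by
  obtain ⟨j, hij, -⟩ := exists_fin_three_ne_and_ne i i
  obtain ⟨k, hik, hjk⟩ := exists_fin_three_ne_and_ne i j
  have hr : (T.circumradius : ℂ) ≠ 0 := Complex.ofReal_ne_zero.2 T.circumradius_pos.ne'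
  have hmul_conj := map_points_vsub_circumcenter_mul_conj e T
  rw [map_orthogonalProjection_vsub_midpoint, map_reflection_circumcenter_vsub e T hi hij hik hjk,
    map_orthocenter_vsub_circumcenter, sum_univ_eq_add_add_of_ne _ hij hik hjk,
    prod_univ_eq_mul_mul_of_ne _ hij hik hjk, map_add, map_add]
  set a := e (T.points i -ᵥ T.circumcenter)
  set b := e (T.points j -ᵥ T.circumcenter)
  set c := e (T.points k -ᵥ T.circumcenter)
  field_simp
  linear_combination (b * c * conj a + c * b * conj b + b * c * conj c) * hmul_conj i +
    T.circumradius ^ 2 * c * hmul_conj j + T.circumradius ^ 2 * b * hmul_conj k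

section PedalTriangle

variable [Fact (finrank ℝ V = 2)] {T S : Triangle ℝ P}

theorem circumsphere_eq_ofDiameter
    (hS : ∀ i, S.points i =
      orthogonalProjection line[ℝ, T.points i, T.orthocenter] T.circumcenter) :
    S.circumsphere = Sphere.ofDiameter T.circumcenter T.orthocenter := by
  have : FiniteDimensional ℝ V := .of_fact_finrank_eq_two
  refine circumsphere_eq_of_forall_mem Fact.out S fun i ↦ ?_
  rw [hS i]
  exact orthogonalProjection_mem_ofDiameter _ _ _

theorem isEulerReflectionPoint_circumcenter (hH : ∀ i, T.orthocenter ≠ T.points i)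
    (hS : ∀ i, S.points i =
      orthogonalProjection line[ℝ, T.points i, T.orthocenter] T.circumcenter) :
    IsEulerReflectionPoint e S T.circumcenter := by
  have hcenter : S.circumcenter = midpoint ℝ T.circumcenter T.orthocenter :=
    congrArg Sphere.center (circumsphere_eq_ofDiameter hS)
  have hradius : S.circumradius = ‖e (T.orthocenter -ᵥ T.circumcenter)‖ / 2 := by
    rw [e.norm_map, ← dist_eq_norm_vsub, dist_comm]
    exact congrArg Sphere.radius (circumsphere_eq_ofDiameter hS)
  have hcircumcenter : e (T.circumcenter -ᵥ S.circumcenter) =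
      -(e (T.orthocenter -ᵥ T.circumcenter) / 2) := by
    rw [hcenter, left_vsub_midpoint, map_smul, ← neg_vsub_eq_vsub_rev, map_neg, Complex.real_smul,
      div_eq_inv_mul, mul_neg]
    simp
  obtain ⟨κ, hκ⟩ : ∃ κ, κ = (∏ j, e (T.points j -ᵥ T.circumcenter)) *
    conj (e (T.orthocenter -ᵥ T.circumcenter)) / (2 * T.circumradius ^ 4) := ⟨_, rfl⟩
  have hpoints (i) :
      e (S.points i -ᵥ S.circumcenter) = -κ * conj (e (T.points i -ᵥ T.circumcenter)) := by
    rw [hS i, hcenter, hκ, map_pedal_vsub_midpoint e T (hH i)]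
  have horthocenter : e (S.orthocenter -ᵥ S.circumcenter) =
      -κ * conj (e (T.orthocenter -ᵥ T.circumcenter)) := by
    simp only [map_orthocenter_vsub_circumcenter, hpoints, map_sum, Finset.mul_sum]
  have hnorm : ‖∏ i, e (T.points i -ᵥ T.circumcenter)‖ = T.circumradius ^ 3 := by
    simp only [norm_prod, norm_map_points_vsub_circumcenter, Finset.prod_const, Finset.card_univ,
      Fintype.card_fin]
  rw [IsEulerReflectionPoint, horthocenter, hcircumcenter, hradius,
    euler_reflection_eq_of_indirect_similarity T.circumradius_pos.ne' hnorm hκ]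
  simp only [hpoints, Finset.prod_mul_distrib, Finset.prod_const, map_prod, Finset.card_univ,
    Fintype.card_fin]

theorem stmt8_general (hH : ∀ i, T.orthocenter ≠ T.points i)
    (hS : ∀ i, S.points i =
      orthogonalProjection line[ℝ, T.points i, T.orthocenter] T.circumcenter)
    {i j : Fin 3} (hij : i ≠ j) :
    Collinear ℝ {reflection line[ℝ, S.points i, S.points j] T.circumcenter, S.circumcenter,
      S.orthocenter} := by
  have : FiniteDimensional ℝ V := .of_fact_finrank_eq_two
  let e : V ≃ₗᵢ[ℝ] ℂ := (Complex.isometryOfOrthonormal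
    ((stdOrthonormalBasis ℝ V).reindex (finCongr Fact.out))).symm
  exact (isEulerReflectionPoint_circumcenter e hH hS).collinear hij

end PedalTriangle

end

theorem stmt8 (A B C O H As Bs Cs Ns Hs : Pt)
    (hABC : AffineIndependent ℝ ![A, B, C])
    (hO : O = circumcenter3 A B C hABC)
    (hH : H = orthocenter3 A B C hABC)
    (hHA : H ≠ A) (hHB : H ≠ B) (hHC : H ≠ C)
    (hAs : As = pedal O A H) (hBs : Bs = pedal O B H) (hCs : Cs = pedal O C H)
    (hind : AffineIndependent ℝ ![As, Bs, Cs])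
    (hNs : Ns = circumcenter3 As Bs Cs hind)
    (hHs : Hs = orthocenter3 As Bs Cs hind) :
    Collinear ℝ ({lineReflect Bs Cs O, Ns, Hs} : Set Pt) ∧
    Collinear ℝ ({lineReflect Cs As O, Ns, Hs} : Set Pt) ∧
    Collinear ℝ ({lineReflect As Bs O, Ns, Hs} : Set Pt) := by
  subst hNs hHs hO hH
  let T : Affine.Triangle ℝ Pt := ⟨![A, B, C], hABC⟩
  let S : Affine.Triangle ℝ Pt := ⟨![As, Bs, Cs], hind⟩
  have hT : ∀ i, T.orthocenter ≠ T.points i :=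
    Fin.forall_fin_succ.2 ⟨hHA, Fin.forall_fin_two.2 ⟨hHB, hHC⟩⟩
  have hS : ∀ i, S.points i =
      orthogonalProjection line[ℝ, T.points i, T.orthocenter] T.circumcenter :=
    Fin.forall_fin_succ.2 ⟨hAs, Fin.forall_fin_two.2 ⟨hBs, hCs⟩⟩
  have : Fact (Module.finrank ℝ Pt = 2) := ⟨finrank_euclideanSpace_fin⟩
  exact ⟨stmt8_general hT hS (i := 1) (j := 2) (by decide),
    stmt8_general hT hS (i := 2) (j := 0) (by decide),
    stmt8_general hT hS (i := 0) (j := 1) (by decide)⟩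

end
end

section
/- Let ABC be a triangle with circumcenter O and orthocenter H, and assume H ∉ {A, B, C}. Let A*, B*, C* be the pedals of O on lines AH, BH, CH, and assume A*, B*, C* are affinely independent with orthocenter H*. Let D be the reflection of H* in line B*C*. Then A, O and D are collinear. -/
/-!
Identify the plane with `ℂ`, with the circumcenter `O` at the origin, and write `a`, `b`, `c`, `h`
for the affixes of `A`, `B`, `C`, `H`, so `h = a + b + c`. Since `A`, `B`, `C` lie on a circle of
radius `r` about `O`, the altitude `AH`, whose direction is `b + c`, has `bc / r²` as the square of
a unit direction. Hence the pedals of `O` are `A* = N - k b c`, `B* = N - k c a` and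
`C* = N - k a b`, where `N` is the midpoint of `OH` and `k = conj h / (2 r²)`. By Thales, `N` is the
circumcenter of `A*B*C*`, and reflecting `H*` in the chord `B*C*` gives `D = N + k a²`. This is
exactly the pedal of `H` on the line `OA`.
-/

open EuclideanGeometry

noncomputable section

open scoped ComplexConjugate InnerProductSpace

theorem ne_of_dist_eq {X : Type*} [MetricSpace X] {x y z : X} (hxy : x ≠ y)
    (h : dist x z = dist y z) : y ≠ z := by
  rintro rfl
  exact hxy (dist_eq_zero.mp (h.trans (dist_self y)))

section Reflection

variable {𝕜 V P : Type*} [RCLike 𝕜] [NormedAddCommGroup V] [InnerProductSpace 𝕜 V]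
  [MetricSpace P] [NormedAddTorsor V P]

theorem reflection_affineSpan_pair_apply (x y p : P) :
    reflection (affineSpan 𝕜 {x, y}) p =
      (2 • (⟪y -ᵥ x, p -ᵥ x⟫_𝕜 / (‖y -ᵥ x‖ : 𝕜) ^ 2) • (y -ᵥ x) - (p -ᵥ x)) +ᵥ x := by
  have hdir : (affineSpan 𝕜 {x, y}).direction = Submodule.span 𝕜 {y -ᵥ x} := by
    rw [direction_affineSpan, vectorSpan_pair_rev]
  rw [reflection_apply_of_mem (affineSpan 𝕜 {x, y}) p (left_mem_affineSpan_pair 𝕜 x y)]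
  simp only [hdir, Submodule.reflection_singleton_apply]

end Reflection

theorem pedal_eq_midpoint_lineReflect (P X Y : Pt) :
    pedal P X Y = midpoint ℝ P (lineReflect X Y P) := by
  simp only [pedal, lineReflect, reflection_apply', midpoint_eq_smul_add, vsub_eq_sub, vadd_eq_add,
    invOf_eq_inv]
  module

theorem pedal_sub_midpoint (P Q X Y : Pt) :
    pedal P X Y - midpoint ℝ P Q = (2 : ℝ)⁻¹ • (lineReflect X Y P - Q) := by
  rw [pedal_eq_midpoint_lineReflect, midpoint_eq_smul_add, midpoint_eq_smul_add, invOf_eq_inv]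
  module

theorem dist_pedal_midpoint (P X Y : Pt) :
    dist (pedal P X Y) (midpoint ℝ P Y) = dist P Y / 2 := by
  rw [dist_eq_norm, pedal_sub_midpoint, norm_smul, ← dist_eq_norm, dist_comm, lineReflect,
    dist_reflection_eq_of_mem _ (right_mem_affineSpan_pair ℝ X Y), dist_comm, Real.norm_eq_abs,
    abs_of_pos (by norm_num)]
  ring

section Triangle

variable {A B C M : Pt} {r : ℝ}

theorem dist_circumcenter3 (h : AffineIndependent ℝ ![A, B, C]) :
    dist A (circumcenter3 A B C h) = circumradius3 A B C h ∧
      dist B (circumcenter3 A B C h) = circumradius3 A B C h ∧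
      dist C (circumcenter3 A B C h) = circumradius3 A B C h :=
  let t : Affine.Triangle ℝ Pt := ⟨![A, B, C], h⟩
  ⟨t.dist_circumcenter_eq_circumradius 0, t.dist_circumcenter_eq_circumradius 1,
    t.dist_circumcenter_eq_circumradius 2⟩

theorem circumcenter3_eq_of_dist_eq (h : AffineIndependent ℝ ![A, B, C]) (hA : dist A M = r)
    (hB : dist B M = r) (hC : dist C M = r) : circumcenter3 A B C h = M := by
  have hspan : affineSpan ℝ (Set.range ![A, B, C]) = ⊤ := by
    rw [h.affineSpan_eq_top_iff_card_eq_finrank_add_one]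
    simp
  refine (Affine.Simplex.eq_circumcenter_of_dist_eq ⟨![A, B, C], h⟩ (r := r) ?_ ?_).symm
  · simp only [hspan, AffineSubspace.mem_top]
  · simp [Fin.forall_fin_succ, hA, hB, hC]

theorem orthocenter3_eq_add_sub (h : AffineIndependent ℝ ![A, B, C]) :
    orthocenter3 A B C h = A + B + C - (2 : ℝ) • circumcenter3 A B C h := by
  have sylvester := Affine.Triangle.orthocenter_vsub_circumcenter_eq_sum_vsub
    (⟨![A, B, C], h⟩ : Affine.Triangle ℝ Pt)
  rw [Fin.sum_univ_three] at sylvester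
  rw [orthocenter3, circumcenter3, eq_add_of_sub_eq sylvester]
  simp only [vsub_eq_sub, Matrix.cons_val]
  module

end Triangle

/-- The identification of the Euclidean plane with `ℂ`, sending `(x, y)` to `x + y * I`. Points are
always fed to it as differences `P - Q`, so `Q` is the origin of the complex coordinate. -/
def toComplex : Pt ≃ₗᵢ[ℝ] ℂ :=
  Complex.orthonormalBasisOneI.repr.symm

theorem toComplex_mul_conj (P Q : Pt) :
    toComplex (P - Q) * conj (toComplex (P - Q)) = (dist P Q : ℂ) ^ 2 := by
  rw [Complex.mul_conj', toComplex.norm_map, dist_eq_norm]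

theorem toComplex_sub_ne_zero {P Q : Pt} : toComplex (P - Q) ≠ 0 ↔ P ≠ Q := by
  rw [Ne, toComplex.map_eq_zero_iff, sub_eq_zero]

/-- `u` is the square of a unit direction of the line `XY`. -/
theorem toComplex_lineReflect_sub {X Y P : Pt} {u : ℂ} (hXY : X ≠ Y)
    (hu : toComplex (Y - X) = u * conj (toComplex (Y - X))) :
    toComplex (lineReflect X Y P - X) = u * conj (toComplex (P - X)) := by
  have hv : toComplex (Y - X) ≠ 0 := toComplex_sub_ne_zero.mpr hXY.symm
  have hv' : conj (toComplex (Y - X)) ≠ 0 := (map_ne_zero _).mpr hv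
  rw [lineReflect, reflection_affineSpan_pair_apply, vadd_eq_add, add_sub_cancel_right, map_sub,
    map_nsmul, map_smul, vsub_eq_sub, vsub_eq_sub, ← toComplex.inner_map_map, ← toComplex.norm_map,
    Complex.inner, Complex.real_smul]
  obtain rfl : u = _ / conj _ := eq_div_of_mul_eq hv' hu.symm
  rw [RCLike.ofReal_real_eq_id, id, Complex.ofReal_div, Complex.ofReal_pow, ← Complex.mul_conj',
    Complex.re_eq_add_conj, map_mul, Complex.conj_conj, nsmul_eq_mul]
  push_cast
  field_simp
  ring

section Pedal

variable {A B C M O H : Pt} {r : ℝ}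

theorem toComplex_lineReflect_orthocenter3 (h : AffineIndependent ℝ ![A, B, C])
    (hA : dist A M = r) (hB : dist B M = r) (hC : dist C M = r) :
    toComplex (lineReflect B C (orthocenter3 A B C h) - M) * conj (toComplex (C - M)) =
      -(toComplex (B - M) * conj (toComplex (A - M))) := by
  have hBC : B ≠ C := h.injective.ne (show (1 : Fin 3) ≠ 2 by decide)
  set a := toComplex (A - M) with ha
  set b := toComplex (B - M)
  set c := toComplex (C - M) with hc
  have hbb : b * conj b = (r : ℂ) ^ 2 := hB ▸ toComplex_mul_conj B M
  have hcc : c * conj c = (r : ℂ) ^ 2 := hC ▸ toComplex_mul_conj C M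
  have hc0 : conj c ≠ 0 :=
    (map_ne_zero _).mpr (toComplex_sub_ne_zero.mpr (ne_of_dist_eq hBC (hB.trans hC.symm)))
  have hCB : toComplex (C - B) = c - b := by
    rw [← sub_sub_sub_cancel_right C B M, map_sub]
  have hHB : toComplex (orthocenter3 A B C h - B) = a + c := by
    rw [ha, hc, ← map_add, orthocenter3_eq_add_sub, circumcenter3_eq_of_dist_eq h hA hB hC]
    congr 1
    module
  have hu : toComplex (C - B) = -b / conj c * conj (toComplex (C - B)) := by
    rw [hCB, map_sub]
    field_simp
    linear_combination hcc - hbb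
  have hrefl := toComplex_lineReflect_sub hBC hu (P := orthocenter3 A B C h)
  rw [← sub_add_sub_cancel _ B M, map_add, hrefl, hHB, map_add]
  field_simp
  ring

theorem toComplex_pedal_altitude_sub (hr : r ≠ 0) (hB : dist B O = r) (hC : dist C O = r)
    (hH : H = A + B + C - (2 : ℝ) • O) (hHA : H ≠ A) :
    toComplex (pedal O A H - midpoint ℝ O H) =
      -(conj (toComplex (H - O)) / (2 * r ^ 2) * toComplex (B - O) * toComplex (C - O)) := by
  set a := toComplex (A - O) with ha
  set b := toComplex (B - O) with hb
  set c := toComplex (C - O) with hc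
  have hbb : b * conj b = (r : ℂ) ^ 2 := hB ▸ toComplex_mul_conj B O
  have hcc : c * conj c = (r : ℂ) ^ 2 := hC ▸ toComplex_mul_conj C O
  have hr' : (r : ℂ) ≠ 0 := Complex.ofReal_ne_zero.mpr hr
  have hh : toComplex (H - O) = a + b + c := by
    rw [ha, hb, hc, ← map_add, ← map_add, hH]
    congr 1
    module
  have hHA' : toComplex (H - A) = b + c := by
    rw [← sub_sub_sub_cancel_right H A O, map_sub, hh]
    ring
  have hu : toComplex (H - A) = b * c / r ^ 2 * conj (toComplex (H - A)) := by
    rw [hHA', map_add]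
    field_simp
    linear_combination -c * hbb - b * hcc
  have hrefl := toComplex_lineReflect_sub (P := O) hHA.symm hu
  rw [pedal_sub_midpoint, map_smul, Complex.real_smul, ← sub_add_sub_cancel _ A H, map_add, hrefl,
    ← neg_sub H A, map_neg, hHA', ← neg_sub A O, map_neg, hh]
  simp only [map_neg, map_add, ← ha]
  push_cast
  field_simp
  linear_combination c * hbb + b * hcc

theorem toComplex_pedal_radius_sub (hr : r ≠ 0) (hA : dist A O = r) :
    toComplex (pedal H O A - midpoint ℝ O H) =
      conj (toComplex (H - O)) / (2 * r ^ 2) * toComplex (A - O) ^ 2 := by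
  have hr' : (r : ℂ) ≠ 0 := Complex.ofReal_ne_zero.mpr hr
  have hAO : A ≠ O := dist_ne_zero.mp (hA ▸ hr)
  have haa : toComplex (A - O) * conj (toComplex (A - O)) = (r : ℂ) ^ 2 :=
    hA ▸ toComplex_mul_conj A O
  have hu : toComplex (A - O) = toComplex (A - O) ^ 2 / r ^ 2 * conj (toComplex (A - O)) := by
    field_simp
    linear_combination -toComplex (A - O) * haa
  rw [midpoint_comm, pedal_sub_midpoint, map_smul, Complex.real_smul,
    toComplex_lineReflect_sub hAO.symm hu]
  push_cast
  field_simp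

theorem lineReflect_orthocenter3_pedals_eq_pedal (hr : r ≠ 0) (hA : dist A O = r)
    (hB : dist B O = r) (hC : dist C O = r) (hH : H = A + B + C - (2 : ℝ) • O)
    (hHA : H ≠ A) (hHB : H ≠ B) (hHC : H ≠ C)
    (h : AffineIndependent ℝ ![pedal O A H, pedal O B H, pedal O C H]) :
    lineReflect (pedal O B H) (pedal O C H)
      (orthocenter3 (pedal O A H) (pedal O B H) (pedal O C H) h) = pedal H O A := by
  have hpA := toComplex_pedal_altitude_sub hr hB hC hH hHA
  have hpB := toComplex_pedal_altitude_sub hr hC hA (by rw [hH]; abel) hHB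
  have hpC := toComplex_pedal_altitude_sub hr hA hB (by rw [hH]; abel) hHC
  have hpD := toComplex_pedal_radius_sub (H := H) hr hA
  have hD := toComplex_lineReflect_orthocenter3 h (dist_pedal_midpoint O A H)
    (dist_pedal_midpoint O B H) (dist_pedal_midpoint O C H)
  have hpC0 : conj (toComplex (pedal O C H - midpoint ℝ O H)) ≠ 0 :=
    (map_ne_zero _).mpr <| toComplex_sub_ne_zero.mpr <|
      ne_of_dist_eq (h.injective.ne (show (1 : Fin 3) ≠ 2 by decide))
        ((dist_pedal_midpoint O B H).trans (dist_pedal_midpoint O C H).symm)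
  have haa := hA ▸ toComplex_mul_conj A O
  have hcc := hC ▸ toComplex_mul_conj C O
  refine sub_left_injective (b := midpoint ℝ O H) (toComplex.injective ?_)
  refine mul_right_cancel₀ hpC0 (hD.trans ?_)
  rw [hpA, hpB, hpC, hpD]
  set k := conj (toComplex (H - O)) / (2 * (r : ℂ) ^ 2)
  simp only [map_neg, map_mul]
  linear_combination k * conj k * toComplex (A - O) * conj (toComplex (B - O)) * (haa - hcc)

end Pedal

theorem stmt9 (A B C O H As Bs Cs Hs D : Pt)
    (hABC : AffineIndependent ℝ ![A, B, C])
    (hO : O = circumcenter3 A B C hABC)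
    (hH : H = orthocenter3 A B C hABC)
    (hHA : H ≠ A) (hHB : H ≠ B) (hHC : H ≠ C)
    (hAs : As = pedal O A H) (hBs : Bs = pedal O B H) (hCs : Cs = pedal O C H)
    (hind : AffineIndependent ℝ ![As, Bs, Cs])
    (hHs : Hs = orthocenter3 As Bs Cs hind)
    (hD : D = lineReflect Bs Cs Hs) :
    Collinear ℝ ({A, O, D} : Set Pt) := by
  obtain ⟨hA, hB, hC⟩ := hO ▸ dist_circumcenter3 hABC
  have hr : circumradius3 A B C hABC ≠ 0 := (Affine.Simplex.circumradius_pos _).ne'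
  have hH' : H = A + B + C - (2 : ℝ) • O := by rw [hH, hO, orthocenter3_eq_add_sub]
  have hD' : D = pedal H O A := by
    subst hAs hBs hCs hHs hD
    exact lineReflect_orthocenter3_pedals_eq_pedal hr hA hB hC hH' hHA hHB hHC hind
  have hline : D ∈ affineSpan ℝ {O, A} := hD' ▸ orthogonalProjection_mem H
  have hcol := collinear_insert_of_mem_affineSpan_pair hline
  rwa [Set.insert_comm, Set.pair_comm, Set.insert_comm] at hcol

end
end

section
/- Let ABC be a triangle with circumcenter O, let l be a line (the affine span of two distinct points), and let T be the orthogonal projection of O onto l. Let R, S, R₂, S₂ be points on l with dist(T,R) = dist(T,S) and dist(T,R₂) = dist(T,S₂). Let R', S', R₂', S₂' be the isogonal conjugates of R, S, R₂, S₂ with respect to ABC, i.e., the circumcenters of their reflection triangles (assume the reflections of each of R, S, R₂, S₂ in the lines BC, CA, AB are affinely independent). Then the segments S'R' and S₂'R₂' are parallel: there exists c : ℝ with S' −ᵥ R' = c • (S₂' −ᵥ R₂') or S₂' −ᵥ R₂' = c • (S' −ᵥ R'). -/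
open EuclideanGeometry

noncomputable section

/-!
A similarity takes the plane to `ℂ` and the circumcircle to the unit circle, where `conj a = a⁻¹`
and the reflection in the chord `bc` is `p ↦ b + c - b * c * conj p`. Equating the distances from
`q` to the three reflections of `p` then gives
`p + q + a * b * c * conj p * conj q = a + b + c` for isogonal conjugates `p` and `q`, and
eliminating `conj q` yields, with `e₁`, `e₂`, `e₃` the elementary symmetric functions of `a, b, c`,
`(1 - ‖p‖ ^ 2) * q = e₁ - p - e₂ * conj p + e₃ * conj p ^ 2`.

Two points `r`, `s` of the line, symmetric about the projection `t` of the centre, have equal norm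
and midpoint `t`. Subtracting their equations,
`(1 - ‖r‖ ^ 2) * (s' - r') = 2 * e₃ * conj t * conj (s - r) - e₂ * conj (s - r) - (s - r)`.
The right side is real-linear in `s - r`, and `s - r` is a real multiple of a fixed direction of the
line, so `s' - r'` is a real multiple of a vector which does not depend on `r` and `s`.
-/

open Module
open scoped ComplexConjugate InnerProductSpace

lemma exists_eq_smul_or_eq_smul {K M : Type*} [DivisionSemiring K] [AddCommMonoid M] [Module K M]
    {x y w : M} {k l : K} (hx : x = k • w) (hy : y = l • w) :
    ∃ c : K, x = c • y ∨ y = c • x := by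
  obtain rfl | hl := eq_or_ne l 0
  · exact ⟨0, .inr (by rw [hy, zero_smul, zero_smul])⟩
  · exact ⟨k * l⁻¹, .inl (by rw [hx, hy, mul_smul, inv_smul_smul₀ hl])⟩

section Torsor

variable {V P : Type*} [NormedAddCommGroup V] [InnerProductSpace ℝ V] [MetricSpace P]
  [NormedAddTorsor V P]

/-- The reflections of `X` in the sidelines `BC`, `CA`, `AB`. -/
def reflectionTriangle (A B C X : P) : Fin 3 → P :=
  ![reflection line[ℝ, B, C] X, reflection line[ℝ, C, A] X, reflection line[ℝ, A, B] X]

/-- `Y` is the isogonal conjugate of `X` with respect to the triangle `ABC` of a plane: the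
reflection triangle of `X` is nondegenerate and `Y` is equidistant from its vertices, that is, `Y`
is its circumcenter. -/
structure IsIsogonalConjugate (A B C X Y : P) : Prop where
  affineIndependent : AffineIndependent ℝ (reflectionTriangle A B C X)
  exists_dist_eq : ∃ ρ : ℝ, ∀ i, dist (reflectionTriangle A B C X i) Y = ρ

lemma isIsogonalConjugate_circumcenter {A B C X : P}
    (h : AffineIndependent ℝ (reflectionTriangle A B C X)) :
    IsIsogonalConjugate A B C X (⟨_, h⟩ : Affine.Triangle ℝ P).circumcenter :=
  ⟨h, _, (⟨_, h⟩ : Affine.Triangle ℝ P).dist_circumcenter_eq_circumradius⟩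

end Torsor

section Line

variable {V P : Type*} [NormedAddCommGroup V] [NormedSpace ℝ V] [MetricSpace P]
  [NormedAddTorsor V P]

lemma eq_or_midpoint_eq_of_dist_eq {U W T X Y : P} (hT : T ∈ line[ℝ, U, W])
    (hX : X ∈ line[ℝ, U, W]) (hY : Y ∈ line[ℝ, U, W]) (h : dist T X = dist T Y) :
    X = Y ∨ midpoint ℝ X Y = T := by
  obtain rfl | hUW := eq_or_ne U W
  · rw [Set.pair_eq_singleton, AffineSubspace.mem_affineSpan_singleton] at hX hY
    exact .inl (hX.trans hY.symm)
  obtain ⟨τ, rfl⟩ := mem_affineSpan_pair_iff_exists_lineMap_eq.1 hT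
  obtain ⟨x, rfl⟩ := mem_affineSpan_pair_iff_exists_lineMap_eq.1 hX
  obtain ⟨y, rfl⟩ := mem_affineSpan_pair_iff_exists_lineMap_eq.1 hY
  rw [dist_lineMap_lineMap, dist_lineMap_lineMap, mul_left_inj' (dist_ne_zero.2 hUW),
    Real.dist_eq, Real.dist_eq, abs_eq_abs] at h
  rcases h with h | h
  · exact .inl (by rw [sub_right_injective h])
  · right
    rw [← AffineMap.map_midpoint, midpoint_eq_smul_add, show (⅟2 : ℝ) • (x + y) = τ by
      rw [invOf_eq_inv, smul_eq_mul]; linarith]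

end Line

section Conformal

variable {V V₂ P P₂ : Type*} [NormedAddCommGroup V] [InnerProductSpace ℝ V] [MetricSpace P]
  [NormedAddTorsor V P] [NormedAddCommGroup V₂] [InnerProductSpace ℝ V₂] [MetricSpace P₂]
  [NormedAddTorsor V₂ P₂] {f : P →ᴬ[ℝ] P₂}

lemma exists_dist_map_eq_mul (hf : IsConformalMap f.contLinear) :
    ∃ k : ℝ, ∀ X Y, dist (f X) (f Y) = k * dist X Y := by
  obtain ⟨k, -, φ, hφ⟩ := hf
  refine ⟨|k|, fun X Y ↦ ?_⟩
  simp [dist_eq_norm_vsub V, dist_eq_norm_vsub V₂, ← f.contLinear_map_vsub, hφ, norm_smul]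

lemma line_map_eq_map (f : P →ᴬ[ℝ] P₂) (A B : P) :
    line[ℝ, f A, f B] = line[ℝ, A, B].map (f : P →ᵃ[ℝ] P₂) := by
  rw [AffineSubspace.map_span, Set.image_pair]; rfl

lemma map_mem_line {A B X : P} (h : X ∈ line[ℝ, A, B]) : f X ∈ line[ℝ, f A, f B] :=
  line_map_eq_map f A B ▸ AffineSubspace.mem_map_of_mem _ h

lemma map_orthogonalProjection_line (hf : IsConformalMap f.contLinear) (A B X : P) :
    f (orthogonalProjection line[ℝ, A, B] X) =
      orthogonalProjection line[ℝ, f A, f B] (f X) := by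
  obtain ⟨c, -, hc⟩ := (isConformalMap_iff _).1 hf
  symm
  rw [coe_orthogonalProjection_eq_iff_mem, line_map_eq_map, AffineSubspace.map_direction,
    Submodule.mem_orthogonal, ← line_map_eq_map]
  refine ⟨map_mem_line (orthogonalProjection_mem X), ?_⟩
  rintro _ ⟨v, hv, rfl⟩
  rw [← f.contLinear_map_vsub, ← f.coe_contLinear_eq_linear]
  exact (hc _ _).trans (by rw [Submodule.inner_right_of_mem_orthogonal hv
    (vsub_orthogonalProjection_mem_direction_orthogonal _ _), mul_zero])

lemma map_reflection_line (hf : IsConformalMap f.contLinear) (A B X : P) :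
    f (reflection line[ℝ, A, B] X) = reflection line[ℝ, f A, f B] (f X) := by
  simp only [reflection_apply', f.map_vadd, f.contLinear_map_vsub,
    map_orthogonalProjection_line hf]

lemma map_reflectionTriangle (hf : IsConformalMap f.contLinear) (A B C X : P) :
    f ∘ reflectionTriangle A B C X = reflectionTriangle (f A) (f B) (f C) (f X) := by
  ext i
  fin_cases i <;> exact map_reflection_line hf _ _ X

lemma IsIsogonalConjugate.map {A B C X Y : P} (h : IsIsogonalConjugate A B C X Y)
    (hf : IsConformalMap f.contLinear) :
    IsIsogonalConjugate (f A) (f B) (f C) (f X) (f Y) where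
  affineIndependent := by
    rw [← map_reflectionTriangle hf]
    exact h.affineIndependent.map' f.toAffineMap (f.linear_injective_iff.1 hf.injective)
  exists_dist_eq := by
    obtain ⟨k, hk⟩ := exists_dist_map_eq_mul hf
    obtain ⟨ρ, hρ⟩ := h.exists_dist_eq
    refine ⟨k * ρ, fun i ↦ ?_⟩
    rw [← map_reflectionTriangle hf, Function.comp_apply, hk, hρ]

lemma exists_isConformalMap_norm_eq [Fact (finrank ℝ V = 2)] (O : P) {ρ : ℝ} (hρ : 0 < ρ) :
    ∃ f : P →ᴬ[ℝ] ℂ, IsConformalMap f.contLinear ∧ ∀ X, ‖f X‖ = ρ⁻¹ * dist X O := by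
  have hV : finrank ℝ V = 2 := Fact.out
  have : FiniteDimensional ℝ V := .of_finrank_pos (by lia)
  let e : V ≃ₗᵢ[ℝ] ℂ := (stdOrthonormalBasis ℝ V).equiv Complex.orthonormalBasisOneI
    (finCongr hV)
  let g : V →L[ℝ] ℂ := ρ⁻¹ • e.toLinearIsometry.toContinuousLinearMap
  let f : P →ᴬ[ℝ] ℂ := g.toContinuousAffineMap.comp
    (ContinuousAffineMap.id ℝ P -ᵥ ContinuousAffineMap.const ℝ P O)
  have hf_apply (X) : f X = g (X -ᵥ O) := rfl
  have hf : f.contLinear = g := by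
    ext v
    calc f.contLinear v = f (v +ᵥ O) -ᵥ f O := by rw [← f.contLinear_map_vsub, vadd_vsub]
      _ = g v := by simp only [hf_apply, vadd_vsub, vsub_self, map_zero, vsub_eq_sub, sub_zero]
  refine ⟨f, ?_, fun X ↦ ?_⟩
  · exact hf ▸ e.toLinearIsometry.isConformalMap.smul (inv_ne_zero hρ.ne')
  · simp [hf_apply, g, dist_eq_norm_vsub V, abs_of_pos hρ]

end Conformal

/-- The direction of the line joining the isogonal conjugates, with respect to the triangle `abc`
inscribed in the unit circle, of two points at equal distance from `0` whose midpoint is `m` and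
whose difference is a real multiple of `w`. -/
def isogonalDirection (a b c m w : ℂ) : ℂ :=
  2 * (a * b * c) * conj m * conj w - (a * b + b * c + c * a) * conj w - w

lemma isogonalDirection_smul (a b c m w : ℂ) (x : ℝ) :
    isogonalDirection a b c m (x • w) = x • isogonalDirection a b c m w := by
  simp only [isogonalDirection, Complex.real_smul, map_mul, Complex.conj_ofReal]
  ring

section UnitCircle

variable {a b c p q r s r' s' u v z : ℂ}

lemma ne_zero_of_norm_eq_one (hz : ‖z‖ = 1) : z ≠ 0 :=
  norm_ne_zero_iff.1 (hz.trans_ne one_ne_zero)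

lemma add_mul_mul_conj_eq_of_mem_line (hb : ‖b‖ = 1) (hc : ‖c‖ = 1) (hz : z ∈ line[ℝ, b, c]) :
    z + b * c * conj z = b + c := by
  have hb₀ : b ≠ 0 := ne_zero_of_norm_eq_one hb
  have hc₀ : c ≠ 0 := ne_zero_of_norm_eq_one hc
  obtain ⟨x, rfl⟩ := mem_affineSpan_pair_iff_exists_lineMap_eq.1 hz
  simp only [AffineMap.lineMap_apply_module', Complex.real_smul, map_add, map_mul, map_sub,
    Complex.conj_ofReal, ← Complex.inv_eq_conj hb, ← Complex.inv_eq_conj hc]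
  field_simp
  ring

lemma eq_mul_mul_conj_of_inner_eq_zero (hb : ‖b‖ = 1) (hc : ‖c‖ = 1) (hbc : b ≠ c)
    (hz : ⟪c - b, z⟫_ℝ = 0) : z = b * c * conj z := by
  have hb₀ : b ≠ 0 := ne_zero_of_norm_eq_one hb
  have hc₀ : c ≠ 0 := ne_zero_of_norm_eq_one hc
  have h : z * conj (c - b) + conj z * (c - b) = 0 := by
    have := Complex.add_conj (z * conj (c - b))
    rwa [← Complex.inner, hz, mul_zero, Complex.ofReal_zero, map_mul, Complex.conj_conj] at this
  rw [map_sub, ← Complex.inv_eq_conj hb, ← Complex.inv_eq_conj hc] at h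
  field_simp at h
  exact mul_left_cancel₀ (sub_ne_zero.2 hbc) (by linear_combination h)

lemma reflection_line_eq (hb : ‖b‖ = 1) (hc : ‖c‖ = 1) (hbc : b ≠ c) (p : ℂ) :
    reflection line[ℝ, b, c] p = b + c - b * c * conj p := by
  have hmem := add_mul_mul_conj_eq_of_mem_line hb hc
    (orthogonalProjection_mem (s := line[ℝ, b, c]) p)
  have horth := eq_mul_mul_conj_of_inner_eq_zero hb hc hbc
    (Submodule.inner_right_of_mem_orthogonal
      (AffineSubspace.vsub_mem_direction (right_mem_affineSpan_pair ℝ b c)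
        (left_mem_affineSpan_pair ℝ b c))
      (orthogonalProjection_vsub_mem_direction_orthogonal line[ℝ, b, c] p))
  rw [reflection_apply']
  simp only [vsub_eq_sub, vadd_eq_add, map_sub] at horth ⊢
  linear_combination horth + hmem

lemma collinear_of_mul_conj_eq {x y z : ℂ} (h : (x - y) * conj (z - y) = conj (x - y) * (z - y)) :
    Collinear ℝ {x, y, z} := by
  obtain rfl | hyz := eq_or_ne z y
  · simpa using collinear_pair ℝ x z
  have hzy : z - y ≠ 0 := sub_ne_zero.2 hyz
  have hreal : conj ((x - y) / (z - y)) = (x - y) / (z - y) := by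
    rw [map_div₀, div_eq_div_iff ((map_ne_zero _).2 hzy) hzy, h]
  obtain ⟨k, hk⟩ := Complex.conj_eq_iff_real.1 hreal
  refine collinear_insert_of_mem_affineSpan_pair
    (mem_affineSpan_pair_iff_exists_lineMap_eq.2 ⟨k, ?_⟩)
  rw [AffineMap.lineMap_apply_module', Complex.real_smul, ← hk, div_mul_cancel₀ _ hzy,
    sub_add_cancel]

variable (ha : ‖a‖ = 1) (hb : ‖b‖ = 1) (hc : ‖c‖ = 1) (hab : a ≠ b) (hbc : b ≠ c) (hca : c ≠ a)

include ha hb hc hab hbc hca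

-- The three reflections lie on the Steiner line of `p`.
lemma not_affineIndependent_reflectionTriangle (hp : ‖p‖ = 1) :
    ¬ AffineIndependent ℝ (reflectionTriangle a b c p) := by
  have ha₀ : a ≠ 0 := ne_zero_of_norm_eq_one ha
  have hb₀ : b ≠ 0 := ne_zero_of_norm_eq_one hb
  have hc₀ : c ≠ 0 := ne_zero_of_norm_eq_one hc
  have hp₀ : p ≠ 0 := ne_zero_of_norm_eq_one hp
  rw [reflectionTriangle, affineIndependent_iff_not_collinear_set, not_not]
  apply collinear_of_mul_conj_eq
  rw [reflection_line_eq hb hc hbc, reflection_line_eq hc ha hca, reflection_line_eq ha hb hab]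
  simp only [map_sub, map_add, map_mul, map_inv₀, inv_inv, ← Complex.inv_eq_conj ha,
    ← Complex.inv_eq_conj hb, ← Complex.inv_eq_conj hc, ← Complex.inv_eq_conj hp]
  field_simp
  ring

-- `c` lies on both sidelines, so it is equidistant from the two reflections and `cq` is their
-- perpendicular bisector. The conclusion says that `(p - c) * (q - c) / ((a - c) * (b - c))` is
-- real: the lines `cp` and `cq` are symmetric about the bisector of the angle at `c`.
lemma mul_eq_mul_conj_of_dist_reflection_eq
    (h : dist (reflection line[ℝ, b, c] p) q = dist (reflection line[ℝ, c, a] p) q) :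
    (p - c) * (q - c) = a * b * c ^ 2 * conj ((p - c) * (q - c)) := by
  have ha₀ : a ≠ 0 := ne_zero_of_norm_eq_one ha
  have hb₀ : b ≠ 0 := ne_zero_of_norm_eq_one hb
  have hc₀ : c ≠ 0 := ne_zero_of_norm_eq_one hc
  rw [reflection_line_eq hb hc hbc, reflection_line_eq hc ha hca, dist_eq_norm, dist_eq_norm] at h
  have hsq := congrArg (fun x : ℝ ↦ (x : ℂ) ^ 2) h
  simp only [← Complex.mul_conj', map_sub, map_add, map_mul, Complex.conj_conj,
    ← Complex.inv_eq_conj ha, ← Complex.inv_eq_conj hb, ← Complex.inv_eq_conj hc] at hsq ⊢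
  field_simp at hsq ⊢
  exact mul_left_cancel₀ (sub_ne_zero.2 hab) (by linear_combination hsq)

namespace IsIsogonalConjugate

lemma norm_ne_one (h : IsIsogonalConjugate a b c p q) : ‖p‖ ≠ 1 := fun hp ↦
  not_affineIndependent_reflectionTriangle ha hb hc hab hbc hca hp h.affineIndependent

lemma add_add_mul_conj_eq (h : IsIsogonalConjugate a b c p q) :
    p + q + a * b * c * conj p * conj q = a + b + c := by
  have hb₀ : b ≠ 0 := ne_zero_of_norm_eq_one hb
  have hc₀ : c ≠ 0 := ne_zero_of_norm_eq_one hc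
  obtain ⟨ρ, hρ⟩ := h.exists_dist_eq
  have hdist (i j) := (hρ i).trans (hρ j).symm
  have isogonal_c := mul_eq_mul_conj_of_dist_reflection_eq ha hb hc hab hbc hca (hdist 0 1)
  have isogonal_b := mul_eq_mul_conj_of_dist_reflection_eq hc ha hb hca hab hbc (hdist 2 0)
  simp only [map_mul, map_sub, ← Complex.inv_eq_conj hb, ← Complex.inv_eq_conj hc]
    at isogonal_b isogonal_c
  field_simp at isogonal_b isogonal_c
  exact mul_left_cancel₀ (sub_ne_zero.2 hbc) (by linear_combination isogonal_c - isogonal_b)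

lemma one_sub_mul_conj_mul_eq (h : IsIsogonalConjugate a b c p q) :
    (1 - p * conj p) * q =
      a + b + c - p - (a * b + b * c + c * a) * conj p + a * b * c * conj p ^ 2 := by
  have ha₀ : a ≠ 0 := ne_zero_of_norm_eq_one ha
  have hb₀ : b ≠ 0 := ne_zero_of_norm_eq_one hb
  have hc₀ : c ≠ 0 := ne_zero_of_norm_eq_one hc
  have hrel := h.add_add_mul_conj_eq ha hb hc hab hbc hca
  have hconj := congrArg conj hrel
  simp only [map_add, map_mul, Complex.conj_conj, ← Complex.inv_eq_conj ha,
    ← Complex.inv_eq_conj hb, ← Complex.inv_eq_conj hc] at hconj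
  field_simp at hconj
  linear_combination hrel - conj p * hconj

lemma smul_sub_eq_isogonalDirection (hrs : ‖r‖ = ‖s‖) (hr : IsIsogonalConjugate a b c r r')
    (hs : IsIsogonalConjugate a b c s s') :
    (1 - ‖r‖ ^ 2) • (s' - r') = isogonalDirection a b c (midpoint ℝ r s) (s - r) := by
  have hr_eq := hr.one_sub_mul_conj_mul_eq ha hb hc hab hbc hca
  have hs_eq := hs.one_sub_mul_conj_mul_eq ha hb hc hab hbc hca
  rw [Complex.mul_conj'] at hr_eq hs_eq
  rw [← hrs] at hs_eq
  simp only [isogonalDirection, midpoint_eq_smul_add, Complex.real_smul, invOf_eq_inv, map_mul,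
    map_add, map_sub, Complex.conj_ofReal]
  push_cast
  linear_combination hs_eq - hr_eq

theorem exists_sub_eq_smul_isogonalDirection (hru : r ∈ line[ℝ, u, v]) (hsu : s ∈ line[ℝ, u, v])
    (hrs : dist ↑(orthogonalProjection line[ℝ, u, v] (0 : ℂ)) r =
      dist ↑(orthogonalProjection line[ℝ, u, v] (0 : ℂ)) s)
    (hr : IsIsogonalConjugate a b c r r') (hs : IsIsogonalConjugate a b c s s') :
    ∃ k : ℝ, s' - r' =
      k • isogonalDirection a b c (orthogonalProjection line[ℝ, u, v] (0 : ℂ)) (u - v) := by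
  have hnorm : ‖r‖ = ‖s‖ := by
    rw [dist_comm _ r, dist_comm _ s] at hrs
    simpa only [dist_zero_right] using (dist_eq_iff_dist_orthogonalProjection_eq 0 hru hsu).2 hrs
  have hsub := smul_sub_eq_isogonalDirection ha hb hc hab hbc hca hnorm hr hs
  have hr_one : 1 - ‖r‖ ^ 2 ≠ 0 := sub_ne_zero.2 fun h ↦
    hr.norm_ne_one ha hb hc hab hbc hca
      ((pow_eq_one_iff_of_nonneg (norm_nonneg r) two_ne_zero).1 h.symm)
  obtain ⟨x, hx⟩ : ∃ x : ℝ, isogonalDirection a b c (midpoint ℝ r s) (s - r) =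
      x • isogonalDirection a b c (orthogonalProjection line[ℝ, u, v] (0 : ℂ)) (u - v) := by
    obtain rfl | hmid :=
      eq_or_midpoint_eq_of_dist_eq (orthogonalProjection_mem (0 : ℂ)) hru hsu hrs
    · exact ⟨0, by simp [isogonalDirection]⟩
    · have hdir := AffineSubspace.vsub_mem_direction hsu hru
      rw [direction_affineSpan, mem_vectorSpan_pair] at hdir
      obtain ⟨x, hx⟩ := hdir
      exact ⟨x, by rw [hmid, ← isogonalDirection_smul]; exact congrArg _ hx.symm⟩
  refine ⟨(1 - ‖r‖ ^ 2)⁻¹ * x, ?_⟩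
  rw [mul_smul, ← hx, ← hsub, inv_smul_smul₀ hr_one]

end IsIsogonalConjugate

end UnitCircle

theorem stmt10_general {V P : Type*} [NormedAddCommGroup V] [InnerProductSpace ℝ V]
    [MetricSpace P] [NormedAddTorsor V P] [Fact (finrank ℝ V = 2)] (t : Affine.Triangle ℝ P)
    {U W T R S R₂ S₂ R' S' R₂' S₂' : P}
    (hT : T = orthogonalProjection line[ℝ, U, W] t.circumcenter)
    (hR : R ∈ line[ℝ, U, W]) (hS : S ∈ line[ℝ, U, W])
    (hR₂ : R₂ ∈ line[ℝ, U, W]) (hS₂ : S₂ ∈ line[ℝ, U, W])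
    (hTR : dist T R = dist T S) (hTR₂ : dist T R₂ = dist T S₂)
    (hR' : IsIsogonalConjugate (t.points 0) (t.points 1) (t.points 2) R R')
    (hS' : IsIsogonalConjugate (t.points 0) (t.points 1) (t.points 2) S S')
    (hR₂' : IsIsogonalConjugate (t.points 0) (t.points 1) (t.points 2) R₂ R₂')
    (hS₂' : IsIsogonalConjugate (t.points 0) (t.points 1) (t.points 2) S₂ S₂') :
    ∃ c : ℝ, S' -ᵥ R' = c • (S₂' -ᵥ R₂') ∨ S₂' -ᵥ R₂' = c • (S' -ᵥ R') := by
  obtain ⟨f, hf, hnorm⟩ := exists_isConformalMap_norm_eq t.circumcenter t.circumradius_pos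
  have hcircle (i) : ‖f (t.points i)‖ = 1 := by
    rw [hnorm, t.dist_circumcenter_eq_circumradius, inv_mul_cancel₀ t.circumradius_pos.ne']
  have hcenter : f t.circumcenter = 0 := by
    rw [← norm_eq_zero, hnorm, dist_self, mul_zero]
  have hne {i j} (hij : i ≠ j) : f (t.points i) ≠ f (t.points j) :=
    (f.linear_injective_iff.1 hf.injective).ne (t.independent.injective.ne hij)
  have hfT : (orthogonalProjection line[ℝ, f U, f W] (0 : ℂ) : ℂ) = f T := by
    rw [hT, map_orthogonalProjection_line hf, hcenter]
  have hdirection {X Y X' Y' : P} (hX : X ∈ line[ℝ, U, W]) (hY : Y ∈ line[ℝ, U, W])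
      (hXY : dist T X = dist T Y)
      (hX' : IsIsogonalConjugate (t.points 0) (t.points 1) (t.points 2) X X')
      (hY' : IsIsogonalConjugate (t.points 0) (t.points 1) (t.points 2) Y Y') :
      ∃ k : ℝ, f.contLinear (Y' -ᵥ X') = k • isogonalDirection (f (t.points 0))
        (f (t.points 1)) (f (t.points 2)) (f T) (f U - f W) := by
    obtain ⟨k, hk⟩ := exists_dist_map_eq_mul hf
    simpa only [hfT, f.contLinear_map_vsub, vsub_eq_sub] using
      IsIsogonalConjugate.exists_sub_eq_smul_isogonalDirection (hcircle 0) (hcircle 1) (hcircle 2)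
        (hne (by decide)) (hne (by decide)) (hne (by decide))
        (map_mem_line hX) (map_mem_line hY)
        (by rw [hfT, hk, hk, hXY]) (hX'.map hf) (hY'.map hf)
  obtain ⟨k, hk⟩ := hdirection hR hS hTR hR' hS'
  obtain ⟨l, hl⟩ := hdirection hR₂ hS₂ hTR₂ hR₂' hS₂'
  obtain ⟨c, hc⟩ := exists_eq_smul_or_eq_smul hk hl
  exact ⟨c, by simpa only [← map_smul, hf.injective.eq_iff] using hc⟩

theorem stmt10 (A B C O U V T R S R₂ S₂ R' S' R₂' S₂' : Pt)
    (hABC : AffineIndependent ℝ ![A, B, C])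
    (hO : O = circumcenter3 A B C hABC)
    (hUV : U ≠ V)
    (hT : T = pedal O U V)
    (hR : R ∈ affineSpan ℝ ({U, V} : Set Pt))
    (hS : S ∈ affineSpan ℝ ({U, V} : Set Pt))
    (hR₂ : R₂ ∈ affineSpan ℝ ({U, V} : Set Pt))
    (hS₂ : S₂ ∈ affineSpan ℝ ({U, V} : Set Pt))
    (hTR : dist T R = dist T S)
    (hTR₂ : dist T R₂ = dist T S₂)
    (hRind : AffineIndependent ℝ ![lineReflect B C R, lineReflect C A R, lineReflect A B R])
    (hSind : AffineIndependent ℝ ![lineReflect B C S, lineReflect C A S, lineReflect A B S])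
    (hR₂ind : AffineIndependent ℝ ![lineReflect B C R₂, lineReflect C A R₂, lineReflect A B R₂])
    (hS₂ind : AffineIndependent ℝ ![lineReflect B C S₂, lineReflect C A S₂, lineReflect A B S₂])
    (hR' : R' = circumcenter3 (lineReflect B C R) (lineReflect C A R) (lineReflect A B R) hRind)
    (hS' : S' = circumcenter3 (lineReflect B C S) (lineReflect C A S) (lineReflect A B S) hSind)
    (hR₂' : R₂' = circumcenter3 (lineReflect B C R₂) (lineReflect C A R₂) (lineReflect A B R₂) hR₂ind)
    (hS₂' : S₂' = circumcenter3 (lineReflect B C S₂) (lineReflect C A S₂) (lineReflect A B S₂) hS₂ind) :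
    ∃ c : ℝ, S' -ᵥ R' = c • (S₂' -ᵥ R₂') ∨ S₂' -ᵥ R₂' = c • (S' -ᵥ R') := by
  subst hO hR' hS' hR₂' hS₂'
  have : Fact (finrank ℝ Pt = 2) := ⟨finrank_euclideanSpace_fin⟩
  exact stmt10_general ⟨![A, B, C], hABC⟩ hT hR hS hR₂ hS₂ hTR hTR₂
    (isIsogonalConjugate_circumcenter hRind) (isIsogonalConjugate_circumcenter hSind)
    (isIsogonalConjugate_circumcenter hR₂ind) (isIsogonalConjugate_circumcenter hS₂ind)

end
end

section
/- Let ABC be a triangle with side lengths a = dist(B,C), b = dist(C,A), c = dist(A,B) and semiperimeter s = (a+b+c)/2. Let A₀ be the point between B and C with dist(B,A₀) = s − c, B₀ the point between C and A with dist(C,B₀) = s − a, and C₀ the point between A and B with dist(A,C₀) = s − b (the touch points of the excircles with the sides). For x > 0 let A1, B1, C1 lie on the rays from A₀ through C, from B₀ through A, from C₀ through B respectively, and let A2, B2, C2 lie on the rays from A₀ through B, from B₀ through C, from C₀ through A respectively, with dist(A₀,A1) = dist(A₀,A2) = dist(B₀,B1) = dist(B₀,B2) = dist(C₀,C1) = dist(C₀,C2)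 = x. Assume A1B1C1 and A2B2C2 are affinely independent with circumcenters O1, O2 and circumradii r1, r2. Then each of the incenter I of ABC, the centroid G of ABC, and the Nagel point N of ABC has equal power with respect to the two circumcircles: dist(X,O1)² − r1² = dist(X,O2)² − r2² for X ∈ {I, G, N}. Hence the radical axis of the circumcircles of A1B1C1 and A2B2C2 passes through the Nagel point, centroid and incenter of ABC. -/
open EuclideanGeometry

noncomputable section

/-
Write `p, q, r` for `s - a, s - b, s - c`. The point at signed distance `x` from `A₀` towards `C`
is `((q - x) B + (r + x) C) / a`, and it has power zero with respect to the first circle. Since the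
power of a point is a quadratic function with leading term the squared norm, this is a linear
equation between the powers of `B` and `C`. With its two cyclic analogues it determines the powers
`u, v, w` of `A, B, C`, and solving shows that both `p u + q v + r w` and `u + v + w` are even
functions of `x`. The second circle satisfies the same equations with `-x` for `x`, so the
difference of the two powers, an affine function, vanishes at the Nagel point and at the centroid,
hence on the whole Nagel line, which contains the incenter.
-/

open AffineMap

section AffineCombination

variable {k E F : Type*} [Ring k] [AddCommGroup E] [Module k E] [AddCommGroup F] [Module k F]

theorem affineMap_combo_three (f : E →ᵃ[k] F) {α β γ : k} (h : α + β + γ = 1) (A B C : E) :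
    f (α • A + β • B + γ • C) = α • f A + β • f B + γ • f C := by
  have hf (X : E) : f X = f.linear X + f 0 := congrFun f.decomp X
  have h0 : f 0 = α • f 0 + β • f 0 + γ • f 0 := by rw [← add_smul, ← add_smul, h, one_smul]
  rw [hf, hf A, hf B, hf C, map_add, map_add, map_smul, map_smul, map_smul]
  nth_rw 1 [h0]
  simp only [smul_add]
  abel

end AffineCombination

section Ray

variable {V P : Type*} [NormedAddCommGroup V] [NormedSpace ℝ V] [MetricSpace P]
  [NormedAddTorsor V P]

theorem eq_lineMap_of_sameRay {X Y W : P} (hXY : X ≠ Y) (hW : SameRay ℝ (Y -ᵥ X) (W -ᵥ X)) :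
    W = lineMap X Y (dist X W / dist X Y) := by
  have hnorm : dist X Y • (W -ᵥ X) = dist X W • (Y -ᵥ X) := by
    simpa only [dist_eq_norm_vsub' V] using hW.norm_smul_eq
  rw [lineMap_apply, div_eq_inv_mul, mul_smul, ← hnorm,
    inv_smul_smul₀ (dist_ne_zero.mpr hXY), vsub_vadd]

theorem eq_lineMap_of_wbtw_of_sameRay {X Y Z W : P} (hZ : Wbtw ℝ X Z Y) (hZY : Z ≠ Y)
    (hW : SameRay ℝ (Y -ᵥ Z) (W -ᵥ Z)) :
    W = lineMap X Y ((dist X Z + dist Z W) / dist X Y) := by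
  have hXY : X ≠ Y := by
    rintro rfl
    exact hZY ((wbtw_self_iff ℝ).mp hZ)
  have hYZ : Y -ᵥ Z ≠ 0 := vsub_ne_zero.mpr hZY.symm
  have hYW : SameRay ℝ (Y -ᵥ X) (W -ᵥ Z) :=
    hZ.sameRay_vsub_right.trans hW fun h ↦ absurd h hYZ
  have hZW : SameRay ℝ (Z -ᵥ X) (W -ᵥ Z) :=
    hZ.sameRay_vsub_left.trans hYW fun h ↦ absurd h (vsub_ne_zero.mpr hXY.symm)
  have hdist : dist X W = dist X Z + dist Z W := by
    simp only [dist_eq_norm_vsub' V]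
    rw [← hZW.norm_add, add_comm, vsub_add_vsub_cancel]
  rw [← hdist]
  refine eq_lineMap_of_sameRay hXY ?_
  rw [← vsub_add_vsub_cancel W Z X]
  exact hYW.add_right hZ.sameRay_vsub_left.symm

end Ray

section ShiftedTouchPoint

variable {V P : Type*} [NormedAddCommGroup V] [NormedSpace ℝ V] [MetricSpace P]
  [NormedAddTorsor V P]

/-- The length of the tangents from the vertex `X` to the incircle of the triangle `XYZ`, that is,
the semiperimeter minus the side opposite `X`. -/
def tangentLength (X Y Z : P) : ℝ :=
  (dist Z X + dist X Y - dist Y Z) / 2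

/-- The point of the line `YZ` at signed distance `x`, counted positively from `Y` to `Z`, from the
point where the side `YZ` touches the excircle opposite `X`. -/
def shiftedTouchPoint (X Y Z : P) (x : ℝ) : P :=
  lineMap Y Z ((tangentLength Z X Y + x) / dist Y Z)

theorem tangentLength_add_tangentLength (X Y Z : P) :
    tangentLength Y Z X + tangentLength Z X Y = dist Y Z := by
  unfold tangentLength
  ring

theorem tangentLength_pos [StrictConvexSpace ℝ V] {X Y Z : P}
    (h : AffineIndependent ℝ ![X, Y, Z]) : 0 < tangentLength X Y Z := by
  have hX : ¬ Wbtw ℝ Y X Z := fun hw ↦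
    affineIndependent_iff_not_collinear_set.mp h.comm_left hw.collinear
  have hlt := dist_lt_dist_add_dist_iff.mpr hX
  rw [dist_comm Y X, dist_comm X Z] at hlt
  unfold tangentLength
  linarith

variable {X Y Z T W : P}

theorem eq_shiftedTouchPoint (hT : Wbtw ℝ Y T Z) (hYT : dist Y T = tangentLength Z X Y)
    (hY : tangentLength Y Z X ≠ 0) (hW : SameRay ℝ (Z -ᵥ T) (W -ᵥ T)) :
    W = shiftedTouchPoint X Y Z (dist T W) := by
  have hTZ : T ≠ Z := by
    rintro rfl
    exact hY (by linarith [tangentLength_add_tangentLength X Y T])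
  rw [shiftedTouchPoint, ← hYT]
  exact eq_lineMap_of_wbtw_of_sameRay hT hTZ hW

theorem eq_shiftedTouchPoint_neg (hT : Wbtw ℝ Y T Z) (hYT : dist Y T = tangentLength Z X Y)
    (hZ : tangentLength Z X Y ≠ 0) (hW : SameRay ℝ (Y -ᵥ T) (W -ᵥ T)) :
    W = shiftedTouchPoint X Y Z (-dist T W) := by
  have hTY : T ≠ Y := by
    rintro rfl
    exact hZ (hYT.symm.trans (dist_self T))
  have hYZ : dist Y Z ≠ 0 := by
    refine dist_ne_zero.mpr ?_
    rintro rfl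
    exact hTY ((wbtw_self_iff ℝ).mp hT)
  have hZT : dist Z T = dist Y Z - dist Y T := by
    linarith [hT.dist_add_dist, dist_comm T Z]
  rw [shiftedTouchPoint, ← hYT, ← lineMap_apply_one_sub]
  convert eq_lineMap_of_wbtw_of_sameRay hT.symm hTY hW using 2
  rw [hZT, dist_comm Z Y]
  field_simp
  ring

end ShiftedTouchPoint

section Power

variable {V P : Type*} [NormedAddCommGroup V] [InnerProductSpace ℝ V] [MetricSpace P]
  [NormedAddTorsor V P]

theorem power_lineMap (S : Sphere P) (X Y : P) (t : ℝ) :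
    S.power (lineMap X Y t) =
      (1 - t) * S.power X + t * S.power Y - t * (1 - t) * dist X Y ^ 2 := by
  have hvec : lineMap X Y t -ᵥ S.center = (1 - t) • (X -ᵥ S.center) + t • (Y -ᵥ S.center) := by
    rw [lineMap_apply, vadd_vsub_assoc, ← vsub_sub_vsub_cancel_right Y X S.center]
    module
  have hXY : X -ᵥ Y = (X -ᵥ S.center) - (Y -ᵥ S.center) :=
    (vsub_sub_vsub_cancel_right X Y S.center).symm
  simp only [Sphere.power, dist_eq_norm_vsub V, hvec, hXY, norm_add_sq_real, norm_sub_sq_real,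
    norm_smul, mul_pow, Real.norm_eq_abs, sq_abs, real_inner_smul_left, real_inner_smul_right]
  ring

/-- The difference of the powers of a point with respect to `S` and `T`, as an affine function; its
zero set is the radical axis of `S` and `T`. -/
def powerDiff (S T : Sphere P) : P →ᵃ[ℝ] ℝ where
  toFun X := S.power X - T.power X
  linear := (2 : ℝ) • (innerₗ V (T.center -ᵥ S.center))
  map_vadd' X v := by
    have hT : T.center -ᵥ S.center = (X -ᵥ S.center) - (X -ᵥ T.center) :=
      (vsub_sub_vsub_cancel_left _ _ _).symm
    simp only [Sphere.power, dist_eq_norm_vsub V, vadd_vsub_assoc, norm_add_sq_real, hT,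
      LinearMap.smul_apply, innerₗ_apply_apply, inner_sub_left, real_inner_comm _ v, vadd_eq_add,
      smul_eq_mul]
    ring

@[simp]
theorem powerDiff_apply (S T : Sphere P) (X : P) : powerDiff S T X = S.power X - T.power X :=
  rfl

variable {A B C : P} {S T : Sphere P} {x : ℝ}

theorem power_relation_of_shiftedTouchPoint_mem (hBC : B ≠ C)
    (hS : shiftedTouchPoint A B C x ∈ S) :
    (tangentLength B C A - x) * S.power B + (tangentLength C A B + x) * S.power C =
      (tangentLength B C A + tangentLength C A B) * (tangentLength B C A - x) *
        (tangentLength C A B + x) := by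
  have hd : dist B C ≠ 0 := dist_ne_zero.mpr hBC
  have hpower : S.power (shiftedTouchPoint A B C x) = 0 := by
    rw [Sphere.power, mem_sphere.mp hS, sub_self]
  have hB : tangentLength B C A = dist B C - tangentLength C A B :=
    eq_sub_of_add_eq (tangentLength_add_tangentLength A B C)
  rw [shiftedTouchPoint, power_lineMap] at hpower
  field_simp at hpower
  rw [hB]
  linear_combination hpower

/-- The sphere `S` passes through the three points obtained by moving the excircle touch points of
the triangle `ABC` by the same signed distance `x` along the boundary oriented as `A → B → C`. -/
structure PassesThroughShiftedTouchPoints (S : Sphere P) (A B C : P) (x : ℝ) : Prop where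
  mem_BC : shiftedTouchPoint A B C x ∈ S
  mem_CA : shiftedTouchPoint B C A x ∈ S
  mem_AB : shiftedTouchPoint C A B x ∈ S

namespace PassesThroughShiftedTouchPoints

theorem nagel_power_sum (hS : PassesThroughShiftedTouchPoints S A B C x)
    (hBC : B ≠ C) (hCA : C ≠ A) (hAB : A ≠ B) :
    letI p := tangentLength A B C
    letI q := tangentLength B C A
    letI r := tangentLength C A B
    2 * (p * S.power A + q * S.power B + r * S.power C) =
      (q + r) * q * r + (r + p) * r * p + (p + q) * p * q - 2 * x ^ 2 * (p + q + r) := by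
  linear_combination power_relation_of_shiftedTouchPoint_mem hBC hS.mem_BC +
    power_relation_of_shiftedTouchPoint_mem hCA hS.mem_CA +
    power_relation_of_shiftedTouchPoint_mem hAB hS.mem_AB

/- Multiplying by the determinant `2 (p q r + x² (p + q + r))` of the linear system for the powers
clears all denominators. -/
theorem centroid_power_sum (hS : PassesThroughShiftedTouchPoints S A B C x)
    (hBC : B ≠ C) (hCA : C ≠ A) (hAB : A ≠ B) :
    letI p := tangentLength A B C
    letI q := tangentLength B C A
    letI r := tangentLength C A B
    2 * (p * q * r + x ^ 2 * (p + q + r)) *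
        (2 * (p ^ 2 + q ^ 2 + r ^ 2) - 3 * x ^ 2 - (S.power A + S.power B + S.power C)) =
      p ^ 2 * (q + r) * (r * p + p * q - q * r + 3 * x ^ 2) +
        q ^ 2 * (r + p) * (p * q + q * r - r * p + 3 * x ^ 2) +
        r ^ 2 * (p + q) * (q * r + r * p - p * q + 3 * x ^ 2) := by
  set p := tangentLength A B C
  set q := tangentLength B C A
  set r := tangentLength C A B
  linear_combination
    -(r * p + p * q - q * r + 2 * x * (q - r) + 3 * x ^ 2) *
        power_relation_of_shiftedTouchPoint_mem hBC hS.mem_BC -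
      (p * q + q * r - r * p + 2 * x * (r - p) + 3 * x ^ 2) *
        power_relation_of_shiftedTouchPoint_mem hCA hS.mem_CA -
      (q * r + r * p - p * q + 2 * x * (p - q) + 3 * x ^ 2) *
        power_relation_of_shiftedTouchPoint_mem hAB hS.mem_AB

end PassesThroughShiftedTouchPoints

end Power

section NagelLine

variable {V : Type*} [NormedAddCommGroup V] [InnerProductSpace ℝ V]

/- The weights are the barycentric coordinates of a point of the line through the Nagel point
`m = 0` and the centroid `k = 0`. -/
theorem power_eq_power_of_mem_nagelLine {A B C : V} {S T : Sphere V} {x k m α β γ : ℝ}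
    (hABC : AffineIndependent ℝ ![A, B, C])
    (hS : PassesThroughShiftedTouchPoints S A B C x)
    (hT : PassesThroughShiftedTouchPoints T A B C (-x))
    (hsum : α + β + γ = 1) (hα : α = k * tangentLength A B C + m)
    (hβ : β = k * tangentLength B C A + m) (hγ : γ = k * tangentLength C A B + m) :
    S.power (α • A + β • B + γ • C) = T.power (α • A + β • B + γ • C) := by
  have hBC : B ≠ C := hABC.injective.ne (show (1 : Fin 3) ≠ 2 by decide)
  have hCA : C ≠ A := hABC.injective.ne (show (2 : Fin 3) ≠ 0 by decide)
  have hAB : A ≠ B := hABC.injective.ne (show (0 : Fin 3) ≠ 1 by decide)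
  have hp : 0 < tangentLength A B C := tangentLength_pos hABC
  have hq : 0 < tangentLength B C A := tangentLength_pos hABC.comm_left.comm_right
  have hr : 0 < tangentLength C A B := tangentLength_pos hABC.comm_right.comm_left
  have hnS := hS.nagel_power_sum hBC hCA hAB
  have hnT := hT.nagel_power_sum hBC hCA hAB
  have hcS := hS.centroid_power_sum hBC hCA hAB
  have hcT := hT.centroid_power_sum hBC hCA hAB
  set p := tangentLength A B C
  set q := tangentLength B C A
  set r := tangentLength C A B
  have hnagel : p * powerDiff S T A + q * powerDiff S T B + r * powerDiff S T C = 0 := by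
    simp only [powerDiff_apply]
    linear_combination (hnS - hnT) / 2
  have hcentroid : powerDiff S T A + powerDiff S T B + powerDiff S T C = 0 := by
    have hdet : 2 * (p * q * r + x ^ 2 * (p + q + r)) ≠ 0 := by positivity
    refine (mul_eq_zero_iff_left hdet).mp ?_
    simp only [powerDiff_apply]
    linear_combination hcT - hcS
  rw [← sub_eq_zero, ← powerDiff_apply, affineMap_combo_three _ hsum, smul_eq_mul, smul_eq_mul,
    smul_eq_mul, hα, hβ, hγ]
  linear_combination k * hnagel + m * hcentroid

theorem power_eq_power_incenter {A B C : V} {S T : Sphere V} {x : ℝ}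
    (hABC : AffineIndependent ℝ ![A, B, C])
    (hS : PassesThroughShiftedTouchPoints S A B C x)
    (hT : PassesThroughShiftedTouchPoints T A B C (-x)) :
    letI I := (dist B C + dist C A + dist A B)⁻¹ • (dist B C • A + dist C A • B + dist A B • C)
    S.power I = T.power I := by
  have hAB : 0 < dist A B :=
    dist_pos.mpr (hABC.injective.ne (show (0 : Fin 3) ≠ 1 by decide))
  have hperimeter : dist B C + dist C A + dist A B ≠ 0 := by positivity
  simp only [smul_add, smul_smul]
  refine power_eq_power_of_mem_nagelLine (k := -(dist B C + dist C A + dist A B)⁻¹) (m := 1 / 2)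
    hABC hS hT ?_ ?_ ?_ ?_
  · rw [← mul_add, ← mul_add, inv_mul_cancel₀ hperimeter]
  all_goals
    unfold tangentLength
    field_simp
    ring

theorem stmt12_general (A B C A₀ B₀ C₀ A1 A2 B1 B2 C1 C2 : V) (S T : Sphere V) (a b c s x : ℝ)
    (hABC : AffineIndependent ℝ ![A, B, C])
    (ha : a = dist B C) (hb : b = dist C A) (hc : c = dist A B)
    (hs : s = (a + b + c) / 2)
    (hA₀w : Wbtw ℝ B A₀ C) (hA₀d : dist B A₀ = s - c)
    (hB₀w : Wbtw ℝ C B₀ A) (hB₀d : dist C B₀ = s - a)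
    (hC₀w : Wbtw ℝ A C₀ B) (hC₀d : dist A C₀ = s - b)
    (hA1 : SameRay ℝ (C -ᵥ A₀) (A1 -ᵥ A₀))
    (hB1 : SameRay ℝ (A -ᵥ B₀) (B1 -ᵥ B₀))
    (hC1 : SameRay ℝ (B -ᵥ C₀) (C1 -ᵥ C₀))
    (hA2 : SameRay ℝ (B -ᵥ A₀) (A2 -ᵥ A₀))
    (hB2 : SameRay ℝ (C -ᵥ B₀) (B2 -ᵥ B₀))
    (hC2 : SameRay ℝ (A -ᵥ C₀) (C2 -ᵥ C₀))
    (hdA1 : dist A₀ A1 = x) (hdA2 : dist A₀ A2 = x)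
    (hdB1 : dist B₀ B1 = x) (hdB2 : dist B₀ B2 = x)
    (hdC1 : dist C₀ C1 = x) (hdC2 : dist C₀ C2 = x)
    (hSA : A1 ∈ S) (hSB : B1 ∈ S) (hSC : C1 ∈ S)
    (hTA : A2 ∈ T) (hTB : B2 ∈ T) (hTC : C2 ∈ T) :
    S.power ((a + b + c)⁻¹ • (a • A + b • B + c • C)) =
        T.power ((a + b + c)⁻¹ • (a • A + b • B + c • C)) ∧
      S.power ((3 : ℝ)⁻¹ • (A + B + C)) = T.power ((3 : ℝ)⁻¹ • (A + B + C)) ∧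
      S.power (((s - a) / s) • A + ((s - b) / s) • B + ((s - c) / s) • C) =
        T.power (((s - a) / s) • A + ((s - b) / s) • B + ((s - c) / s) • C) := by
  have hp : s - a = tangentLength A B C := by rw [hs, ha, hb, hc, tangentLength]; ring
  have hq : s - b = tangentLength B C A := by rw [hs, ha, hb, hc, tangentLength]; ring
  have hr : s - c = tangentLength C A B := by rw [hs, ha, hb, hc, tangentLength]; ring
  have hp0 : 0 < tangentLength A B C := tangentLength_pos hABC
  have hq0 : 0 < tangentLength B C A := tangentLength_pos hABC.comm_left.comm_right
  have hr0 : 0 < tangentLength C A B := tangentLength_pos hABC.comm_right.comm_left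
  rw [hr] at hA₀d
  rw [hp] at hB₀d
  rw [hq] at hC₀d
  have hS : PassesThroughShiftedTouchPoints S A B C x :=
    ⟨by rwa [← hdA1, ← eq_shiftedTouchPoint hA₀w hA₀d hq0.ne' hA1],
      by rwa [← hdB1, ← eq_shiftedTouchPoint hB₀w hB₀d hr0.ne' hB1],
      by rwa [← hdC1, ← eq_shiftedTouchPoint hC₀w hC₀d hp0.ne' hC1]⟩
  have hT : PassesThroughShiftedTouchPoints T A B C (-x) :=
    ⟨by rwa [← hdA2, ← eq_shiftedTouchPoint_neg hA₀w hA₀d hr0.ne' hA2],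
      by rwa [← hdB2, ← eq_shiftedTouchPoint_neg hB₀w hB₀d hp0.ne' hB2],
      by rwa [← hdC2, ← eq_shiftedTouchPoint_neg hC₀w hC₀d hq0.ne' hC2]⟩
  have hs0 : s ≠ 0 := by linarith
  refine ⟨?_, ?_, ?_⟩
  · rw [ha, hb, hc]
    exact power_eq_power_incenter hABC hS hT
  · simp only [smul_add]
    exact power_eq_power_of_mem_nagelLine (k := 0) (m := 3⁻¹) hABC hS hT (by norm_num) (by ring)
      (by ring) (by ring)
  · rw [hp, hq, hr]
    refine power_eq_power_of_mem_nagelLine (k := s⁻¹) (m := 0) hABC hS hT ?_ (by ring) (by ring)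
      (by ring)
    field_simp
    linarith

end NagelLine

theorem stmt12 (A B C A₀ B₀ C₀ A1 A2 B1 B2 C1 C2 O1 O2 : Pt) (a b c s x r1 r2 : ℝ)
    (hABC : AffineIndependent ℝ ![A, B, C])
    (ha : a = dist B C) (hb : b = dist C A) (hc : c = dist A B)
    (hs : s = (a + b + c) / 2)
    (hA₀w : Wbtw ℝ B A₀ C) (hA₀d : dist B A₀ = s - c)
    (hB₀w : Wbtw ℝ C B₀ A) (hB₀d : dist C B₀ = s - a)
    (hC₀w : Wbtw ℝ A C₀ B) (hC₀d : dist A C₀ = s - b)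
    (hx : 0 < x)
    (hA1 : SameRay ℝ (C -ᵥ A₀) (A1 -ᵥ A₀))
    (hB1 : SameRay ℝ (A -ᵥ B₀) (B1 -ᵥ B₀))
    (hC1 : SameRay ℝ (B -ᵥ C₀) (C1 -ᵥ C₀))
    (hA2 : SameRay ℝ (B -ᵥ A₀) (A2 -ᵥ A₀))
    (hB2 : SameRay ℝ (C -ᵥ B₀) (B2 -ᵥ B₀))
    (hC2 : SameRay ℝ (A -ᵥ C₀) (C2 -ᵥ C₀))
    (hdA1 : dist A₀ A1 = x) (hdA2 : dist A₀ A2 = x)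
    (hdB1 : dist B₀ B1 = x) (hdB2 : dist B₀ B2 = x)
    (hdC1 : dist C₀ C1 = x) (hdC2 : dist C₀ C2 = x)
    (h1 : AffineIndependent ℝ ![A1, B1, C1])
    (h2 : AffineIndependent ℝ ![A2, B2, C2])
    (hO1 : O1 = circumcenter3 A1 B1 C1 h1) (hr1 : r1 = circumradius3 A1 B1 C1 h1)
    (hO2 : O2 = circumcenter3 A2 B2 C2 h2) (hr2 : r2 = circumradius3 A2 B2 C2 h2) :
    (dist (incenter3 A B C) O1 ^ 2 - r1 ^ 2 = dist (incenter3 A B C) O2 ^ 2 - r2 ^ 2) ∧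
    (dist (centroid3 A B C) O1 ^ 2 - r1 ^ 2 = dist (centroid3 A B C) O2 ^ 2 - r2 ^ 2) ∧
    (dist (nagelPoint A B C) O1 ^ 2 - r1 ^ 2 = dist (nagelPoint A B C) O2 ^ 2 - r2 ^ 2) := by
  subst hO1 hr1 hO2 hr2 hs ha hb hc
  let t₁ : Affine.Triangle ℝ Pt := ⟨_, h1⟩
  let t₂ : Affine.Triangle ℝ Pt := ⟨_, h2⟩
  exact stmt12_general A B C A₀ B₀ C₀ A1 A2 B1 B2 C1 C2 t₁.circumsphere t₂.circumsphere _ _ _ _ x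
    hABC rfl rfl rfl rfl hA₀w hA₀d hB₀w hB₀d hC₀w hC₀d hA1 hB1 hC1 hA2 hB2 hC2 hdA1 hdA2 hdB1 hdB2
    hdC1 hdC2 (t₁.mem_circumsphere 0) (t₁.mem_circumsphere 1) (t₁.mem_circumsphere 2)
    (t₂.mem_circumsphere 0) (t₂.mem_circumsphere 1) (t₂.mem_circumsphere 2)

end
end

section
/- Let ABC be a triangle with circumcenter O and orthocenter H, with H ∉ {A, B, C} and A ≠ O. Let A_H, B_H, C_H be the feet of the altitudes (the pedals of A, B, C on lines BC, CA, AB respectively), let A*, B*, C* be the pedals of O on lines AH, BH, CH, and assume A*, B*, C* are affinely independent with orthocenter H*. Let J be a point lying both on line AO and on line B_H C_H. Then A_H, J and H* are collinear. -/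
open EuclideanGeometry

noncomputable section

/-
Write `D`, `E`, `F` for the feet of the altitudes from `A`, `B`, `C`. Triangle `AEF` is oppositely
similar to `ABC`, so its altitude from `A` runs along `AO`: hence `J` is the foot of that altitude,
and the orthocenter `T` of `AEF` lies on `AO` too. Since `EHFT` is a parallelogram, `T = E + F - H`.
The similarity gives `AJ : AT = AD : AH`, so `JD` is parallel to `TH`.

By Sylvester's relation `A* = D + (A - H) / 2`, and similarly for `B*` and `C*`. These three points
see the segment `OH` under a right angle, so the circumcenter of `A*B*C*` is the midpoint of `OH`,
and a second use of Sylvester's relation gives `H* = D + E + F - 2H`. Thus `H* - D = T - H`, which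
is parallel to `J - D`.
-/

section Triangle

open scoped RealInnerProductSpace
open Affine Affine.Simplex Affine.Triangle AffineSubspace

variable {V P : Type*} [NormedAddCommGroup V] [InnerProductSpace ℝ V] [MetricSpace P]
  [NormedAddTorsor V P]

theorem inner_vsub_vsub_self (p q : P) : ⟪q -ᵥ p, q -ᵥ p⟫ = dist p q ^ 2 := by
  rw [real_inner_self_eq_norm_sq, dist_eq_norm_vsub']

theorem dist_sq_smul_orthogonalProjection_line_vsub (p q x : P) :
    dist p q ^ 2 • ((orthogonalProjection line[ℝ, p, q] x : P) -ᵥ p) =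
      ⟪q -ᵥ p, x -ᵥ p⟫ • (q -ᵥ p) := by
  rw [orthogonalProjection_apply_mem _ (left_mem_affineSpan_pair ℝ p q), vadd_vsub,
    Submodule.coe_orthogonalProjectionOnto_apply, ← Submodule.smul_starProjection_singleton ℝ,
    dist_eq_norm_vsub', RCLike.ofReal_real_eq_id, id]
  simp only [direction_affineSpan, vectorSpan_pair_rev]

theorem dist_sq_mul_dist_orthogonalProjection_line_sq (p q x : P) :
    dist p q ^ 2 * dist x (orthogonalProjection line[ℝ, p, q] x) ^ 2 =
      dist p x ^ 2 * dist p q ^ 2 - ⟪q -ᵥ p, x -ᵥ p⟫ ^ 2 := by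
  obtain rfl | hpq := eq_or_ne p q
  · simp
  have hproj := dist_sq_smul_orthogonalProjection_line_vsub p q x
  set f := (orthogonalProjection line[ℝ, p, q] x : P)
  have hsplit : dist p q ^ 2 • (x -ᵥ f) =
      dist p q ^ 2 • (x -ᵥ p) - ⟪q -ᵥ p, x -ᵥ p⟫ • (q -ᵥ p) := by
    rw [← hproj, ← smul_sub, vsub_sub_vsub_cancel_right]
  have hinner := congrArg (fun w ↦ ⟪w, w⟫) hsplit
  simp only [inner_sub_left, inner_sub_right, real_inner_smul_left, real_inner_smul_right,
    inner_vsub_vsub_self, real_inner_comm (q -ᵥ p) (x -ᵥ p)] at hinner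
  refine mul_left_cancel₀ (pow_ne_zero 2 (dist_ne_zero.2 hpq)) ?_
  rw [dist_comm x f]
  linear_combination hinner

theorem dist_orthogonalProjection_line_eq_dist_mul_sin_angle (p q x : P) :
    dist x (orthogonalProjection line[ℝ, p, q] x) = dist x p * Real.sin (∠ x p q) := by
  obtain rfl | hpq := eq_or_ne p q
  · simp
  have hcos := InnerProductGeometry.cos_angle_mul_norm_mul_norm (x -ᵥ p) (q -ᵥ p)
  rw [← dist_eq_norm_vsub, ← dist_eq_norm_vsub, real_inner_comm] at hcos
  rw [EuclideanGeometry.angle,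
    ← sq_eq_sq₀ dist_nonneg (mul_nonneg dist_nonneg (InnerProductGeometry.sin_angle_nonneg _ _)),
    mul_pow, Real.sin_sq]
  refine mul_left_cancel₀ (pow_ne_zero 2 (dist_ne_zero.2 hpq)) ?_
  rw [dist_sq_mul_dist_orthogonalProjection_line_sq, ← hcos, dist_comm p x, dist_comm p q]
  ring

section Simplex

variable {n : ℕ} (s : Simplex ℝ P n)

theorem inner_points_vsub_circumcenter_vsub (i j : Fin (n + 1)) :
    ⟪s.points j -ᵥ s.points i, s.circumcenter -ᵥ s.points i⟫ =
      dist (s.points i) (s.points j) ^ 2 / 2 := by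
  rw [real_inner_comm, ← mem_perpBisector_iff_inner_eq, mem_perpBisector_iff_dist_eq']
  simp

theorem inner_points_vsub_altitudeFoot_vsub [NeZero n] {i j : Fin (n + 1)} (h : i ≠ j) :
    ⟪s.points j -ᵥ s.points i, s.altitudeFoot i -ᵥ s.points i⟫ = s.height i ^ 2 := by
  rw [← s.inner_vsub_vsub_altitudeFoot_eq_height_sq h, ← inner_neg_neg, neg_vsub_eq_vsub_rev,
    neg_vsub_eq_vsub_rev]

theorem inner_points_vsub_vsub_of_mem_altitude [NeZero n] {i j k : Fin (n + 1)} (hik : i ≠ k)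
    (hjk : j ≠ k) {p : P} (hp : p ∈ s.altitude k) :
    ⟪s.points j -ᵥ s.points i, p -ᵥ s.points i⟫ =
      ⟪s.points j -ᵥ s.points i, s.points k -ᵥ s.points i⟫ := by
  rw [← sub_eq_zero, ← inner_sub_right, vsub_sub_vsub_cancel_right]
  exact Submodule.isOrtho_iff_inner_eq.1 (s.vectorSpan_isOrtho_altitude_direction k) _
    (vsub_mem_vectorSpan ℝ (Set.mem_image_of_mem _ hjk) (Set.mem_image_of_mem _ hik)) _
    (vsub_mem_direction hp (s.mem_altitude k))

theorem circumcenter_eq_midpoint_of_angle_eq_pi_div_two {p q : P}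
    (hp : p ∈ affineSpan ℝ (Set.range s.points)) (hq : q ∈ affineSpan ℝ (Set.range s.points))
    (h : ∀ i, ∠ p (s.points i) q = Real.pi / 2) : s.circumcenter = midpoint ℝ p q :=
  (s.eq_circumcenter_of_dist_eq (AffineMap.lineMap_mem _ hp hq) fun i ↦
    Sphere.angle_eq_pi_div_two_iff_mem_sphere_ofDiameter.1 (h i)).symm

theorem vsub_points_mem_vectorSpan {p : P} (hp : p ∈ affineSpan ℝ (Set.range s.points))
    (i : Fin (n + 1)) : p -ᵥ s.points i ∈ vectorSpan ℝ (Set.range s.points) :=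
  vsub_mem_vectorSpan_of_mem_affineSpan_of_mem_affineSpan hp
    (mem_affineSpan ℝ (Set.mem_range_self i))

theorem affineSpan_range_points_eq_of_forall_mem (s' : Simplex ℝ P n)
    (h : ∀ i, s'.points i ∈ affineSpan ℝ (Set.range s.points)) :
    affineSpan ℝ (Set.range s'.points) = affineSpan ℝ (Set.range s.points) := by
  refine s'.independent.affineSpan_eq_of_le_of_card_eq_finrank_add_one
    (affineSpan_le_of_subset_coe (Set.range_subset_iff.2 h)) ?_
  rw [direction_affineSpan, s.independent.finrank_vectorSpan (Fintype.card_fin _),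
    Fintype.card_fin]

end Simplex

variable (t : Triangle ℝ P) {i₁ i₂ i₃ : Fin 3}

theorem eq_of_inner_points_vsub_eq (h₁₂ : i₁ ≠ i₂) (h₁₃ : i₁ ≠ i₃) (h₂₃ : i₂ ≠ i₃) {u v : V}
    (hu : u ∈ vectorSpan ℝ (Set.range t.points)) (hv : v ∈ vectorSpan ℝ (Set.range t.points))
    (h₂ : ⟪t.points i₂ -ᵥ t.points i₁, u⟫ = ⟪t.points i₂ -ᵥ t.points i₁, v⟫)
    (h₃ : ⟪t.points i₃ -ᵥ t.points i₁, u⟫ = ⟪t.points i₃ -ᵥ t.points i₁, v⟫) : u = v := by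
  have hle : vectorSpan ℝ (Set.range t.points) ≤ (ℝ ∙ (u - v))ᗮ := by
    rw [vectorSpan_range_eq_span_range_vsub_right ℝ _ i₁, Submodule.span_le]
    rintro _ ⟨i, rfl⟩
    rw [SetLike.mem_coe, Submodule.mem_orthogonal_singleton_iff_inner_left, inner_sub_right,
      sub_eq_zero]
    obtain rfl | rfl | rfl : i = i₁ ∨ i = i₂ ∨ i = i₃ := by grind
    · simp
    · exact h₂
    · exact h₃
  have h := Submodule.mem_orthogonal_singleton_iff_inner_left.1 (hle (sub_mem hu hv))
  exact sub_eq_zero.1 (inner_self_eq_zero.1 h)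

theorem altitudeFoot_eq_orthogonalProjection_line (h₁₂ : i₁ ≠ i₂) (h₁₃ : i₁ ≠ i₃)
    (h₂₃ : i₂ ≠ i₃) :
    t.altitudeFoot i₁ = orthogonalProjection line[ℝ, t.points i₂, t.points i₃] (t.points i₁) := by
  have hcompl : ({i₁}ᶜ : Set (Fin 3)) = {i₂, i₃} := by grind
  have hrange : Set.range (t.faceOpposite i₁).points = {t.points i₂, t.points i₃} := by
    rw [range_faceOpposite_points, hcompl, Set.image_pair]
  simp only [altitudeFoot, orthogonalProjectionSpan, hrange]

theorem two_mul_circumradius_mul_height (h₁₂ : i₁ ≠ i₂) (h₁₃ : i₁ ≠ i₃) (h₂₃ : i₂ ≠ i₃) :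
    2 * t.circumradius * t.height i₁ =
      dist (t.points i₁) (t.points i₂) * dist (t.points i₁) (t.points i₃) := by
  have hheight : t.height i₁ = dist (t.points i₁) (t.points i₂) *
      Real.sin (∠ (t.points i₁) (t.points i₂) (t.points i₃)) := by
    rw [height, altitudeFoot_eq_orthogonalProjection_line t h₁₂ h₁₃ h₂₃,
      dist_orthogonalProjection_line_eq_dist_mul_sin_angle]
  have hsin : Real.sin (∠ (t.points i₁) (t.points i₂) (t.points i₃)) ≠ 0 :=
    right_ne_zero_of_mul (hheight ▸ (t.height_pos i₁).ne')
  rw [← dist_div_sin_angle_eq_two_mul_circumradius t h₁₂ h₁₃ h₂₃, hheight]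
  field_simp

theorem dist_sq_smul_altitudeFoot_vsub (h₁₂ : i₁ ≠ i₂) (h₁₃ : i₁ ≠ i₃) (h₂₃ : i₂ ≠ i₃) :
    dist (t.points i₁) (t.points i₃) ^ 2 • (t.altitudeFoot i₂ -ᵥ t.points i₁) =
      ⟪t.points i₂ -ᵥ t.points i₁, t.points i₃ -ᵥ t.points i₁⟫ •
        (t.points i₃ -ᵥ t.points i₁) := by
  rw [altitudeFoot_eq_orthogonalProjection_line t h₁₂.symm h₂₃ h₁₃, real_inner_comm]
  exact dist_sq_smul_orthogonalProjection_line_vsub _ _ _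

theorem inner_altitudeFoot_vsub_circumcenter_vsub (h₁₂ : i₁ ≠ i₂) (h₁₃ : i₁ ≠ i₃)
    (h₂₃ : i₂ ≠ i₃) :
    ⟪t.altitudeFoot i₂ -ᵥ t.points i₁, t.circumcenter -ᵥ t.points i₁⟫ =
      ⟪t.points i₂ -ᵥ t.points i₁, t.points i₃ -ᵥ t.points i₁⟫ / 2 := by
  have hne : dist (t.points i₁) (t.points i₃) ≠ 0 :=
    dist_ne_zero.2 (t.independent.injective.ne h₁₃)
  refine mul_left_cancel₀ (pow_ne_zero 2 hne) ?_
  rw [← real_inner_smul_left, dist_sq_smul_altitudeFoot_vsub t h₁₂ h₁₃ h₂₃, real_inner_smul_left,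
    inner_points_vsub_circumcenter_vsub]
  ring

theorem inner_smul_altitudeFoot_vsub_eq_height_sq_smul_orthocenter_vsub (h₁₂ : i₁ ≠ i₂)
    (h₁₃ : i₁ ≠ i₃) (h₂₃ : i₂ ≠ i₃) :
    ⟪t.points i₂ -ᵥ t.points i₁, t.points i₃ -ᵥ t.points i₁⟫ •
        (t.altitudeFoot i₁ -ᵥ t.points i₁) =
      t.height i₁ ^ 2 • (t.orthocenter -ᵥ t.points i₁) := by
  refine eq_of_inner_points_vsub_eq t h₁₂ h₁₃ h₂₃
    (Submodule.smul_mem _ _ (vsub_points_mem_vectorSpan t (t.altitudeFoot_mem_affineSpan _) _))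
    (Submodule.smul_mem _ _ (vsub_points_mem_vectorSpan t t.orthocenter_mem_affineSpan _)) ?_ ?_
  · rw [inner_smul_right, inner_smul_right, inner_points_vsub_altitudeFoot_vsub t h₁₂,
      inner_points_vsub_vsub_of_mem_altitude t h₁₃ h₂₃ t.orthocenter_mem_altitude, mul_comm]
  · rw [inner_smul_right, inner_smul_right, inner_points_vsub_altitudeFoot_vsub t h₁₃,
      inner_points_vsub_vsub_of_mem_altitude t h₁₂ h₂₃.symm t.orthocenter_mem_altitude,
      mul_comm, real_inner_comm]

/-- The fourth vertex `T` of the parallelogram `EHFT`, where `E` and `F` are the feet of the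
altitudes from the vertices `i` and `j`, and `H` is the orthocenter. For `i ≠ j` it stands for the
orthocenter of the triangle formed by `E`, `F` and the remaining vertex. -/
def footParallelogramVertex (i j : Fin 3) : P :=
  (t.altitudeFoot i -ᵥ t.orthocenter) +ᵥ t.altitudeFoot j

theorem footParallelogramVertex_vsub (i j : Fin 3) (p : P) :
    footParallelogramVertex t i j -ᵥ p =
      (t.altitudeFoot i -ᵥ p) + (t.altitudeFoot j -ᵥ p) - (t.orthocenter -ᵥ p) := by
  rw [footParallelogramVertex, vadd_vsub_assoc,
    ← vsub_sub_vsub_cancel_right (t.altitudeFoot i) t.orthocenter p, sub_add_eq_add_sub]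

theorem footParallelogramVertex_comm (i j : Fin 3) :
    footParallelogramVertex t i j = footParallelogramVertex t j i := by
  rw [← vsub_left_cancel_iff (p := t.orthocenter), footParallelogramVertex_vsub,
    footParallelogramVertex_vsub, add_comm (t.altitudeFoot i -ᵥ _)]

theorem footParallelogramVertex_mem_affineSpan (i j : Fin 3) :
    footParallelogramVertex t i j ∈ affineSpan ℝ (Set.range t.points) :=
  vadd_mem_of_mem_direction
    (vsub_mem_direction (t.altitudeFoot_mem_affineSpan i) t.orthocenter_mem_affineSpan)
    (t.altitudeFoot_mem_affineSpan j)

theorem dist_sq_mul_inner_footParallelogramVertex_vsub (h₁₂ : i₁ ≠ i₂) (h₁₃ : i₁ ≠ i₃)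
    (h₂₃ : i₂ ≠ i₃) :
    dist (t.points i₁) (t.points i₃) ^ 2 *
        ⟪t.points i₂ -ᵥ t.points i₁, footParallelogramVertex t i₂ i₃ -ᵥ t.points i₁⟫ =
      ⟪t.points i₂ -ᵥ t.points i₁, t.points i₃ -ᵥ t.points i₁⟫ ^ 2 := by
  rw [footParallelogramVertex_vsub, inner_sub_right, inner_add_right,
    inner_points_vsub_vsub_of_mem_altitude t h₁₃ h₂₃ (t.altitudeFoot_mem_altitude i₃),
    inner_points_vsub_vsub_of_mem_altitude t h₁₃ h₂₃ t.orthocenter_mem_altitude,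
    add_sub_cancel_right, ← real_inner_smul_right, dist_sq_smul_altitudeFoot_vsub t h₁₂ h₁₃ h₂₃,
    real_inner_smul_right, sq]

theorem two_mul_circumradius_mul_height_sq_smul_footParallelogramVertex_vsub (h₁₂ : i₁ ≠ i₂)
    (h₁₃ : i₁ ≠ i₃) (h₂₃ : i₂ ≠ i₃) :
    (2 * t.circumradius * t.height i₁) ^ 2 •
        (footParallelogramVertex t i₂ i₃ -ᵥ t.points i₁) =
      (2 * ⟪t.points i₂ -ᵥ t.points i₁, t.points i₃ -ᵥ t.points i₁⟫ ^ 2) •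
        (t.circumcenter -ᵥ t.points i₁) := by
  have hT₂ := dist_sq_mul_inner_footParallelogramVertex_vsub t h₁₂ h₁₃ h₂₃
  have hT₃ := dist_sq_mul_inner_footParallelogramVertex_vsub t h₁₃ h₁₂ h₂₃.symm
  rw [footParallelogramVertex_comm, real_inner_comm (t.points i₂ -ᵥ t.points i₁)] at hT₃
  rw [two_mul_circumradius_mul_height t h₁₂ h₁₃ h₂₃]
  refine eq_of_inner_points_vsub_eq t h₁₂ h₁₃ h₂₃
    (Submodule.smul_mem _ _
      (vsub_points_mem_vectorSpan t (footParallelogramVertex_mem_affineSpan t i₂ i₃) _))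
    (Submodule.smul_mem _ _ (vsub_points_mem_vectorSpan t t.circumcenter_mem_affineSpan _)) ?_ ?_
  · rw [real_inner_smul_right, real_inner_smul_right, inner_points_vsub_circumcenter_vsub]
    linear_combination dist (t.points i₁) (t.points i₂) ^ 2 * hT₂
  · rw [real_inner_smul_right, real_inner_smul_right, inner_points_vsub_circumcenter_vsub]
    linear_combination dist (t.points i₁) (t.points i₃) ^ 2 * hT₃

theorem mul_circumradius_sq_eq_of_lineMap_mem_line_altitudeFoot {x : ℝ} (h₁₂ : i₁ ≠ i₂)
    (h₁₃ : i₁ ≠ i₃) (h₂₃ : i₂ ≠ i₃)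
    (hx : AffineMap.lineMap (t.points i₁) t.circumcenter x ∈
      line[ℝ, t.altitudeFoot i₂, t.altitudeFoot i₃]) :
    x * t.circumradius ^ 2 =
      ⟪t.points i₂ -ᵥ t.points i₁, t.points i₃ -ᵥ t.points i₁⟫ / 2 := by
  obtain ⟨y, hy⟩ := mem_affineSpan_pair_iff_exists_lineMap_eq.1 hx
  have hinner := congrArg (fun p ↦ ⟪p -ᵥ t.points i₁, t.circumcenter -ᵥ t.points i₁⟫) hy
  simp only [AffineMap.lineMap_vsub_left, AffineMap.lineMap_vsub, AffineMap.lineMap_apply_module,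
    inner_add_left, real_inner_smul_left, inner_vsub_vsub_self, dist_circumcenter_eq_circumradius,
    inner_altitudeFoot_vsub_circumcenter_vsub t h₁₂ h₁₃ h₂₃,
    inner_altitudeFoot_vsub_circumcenter_vsub t h₁₃ h₁₂ h₂₃.symm,
    real_inner_comm (t.points i₂ -ᵥ t.points i₁)] at hinner
  linear_combination -hinner

theorem inner_smul_vsub_eq_height_sq_smul_footParallelogramVertex_vsub {J : P} (h₁₂ : i₁ ≠ i₂)
    (h₁₃ : i₁ ≠ i₃) (h₂₃ : i₂ ≠ i₃) (hJO : J ∈ line[ℝ, t.points i₁, t.circumcenter])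
    (hJ : J ∈ line[ℝ, t.altitudeFoot i₂, t.altitudeFoot i₃]) :
    ⟪t.points i₂ -ᵥ t.points i₁, t.points i₃ -ᵥ t.points i₁⟫ • (J -ᵥ t.points i₁) =
      t.height i₁ ^ 2 • (footParallelogramVertex t i₂ i₃ -ᵥ t.points i₁) := by
  obtain ⟨x, rfl⟩ := mem_affineSpan_pair_iff_exists_lineMap_eq.1 hJO
  have hx := mul_circumradius_sq_eq_of_lineMap_mem_line_altitudeFoot t h₁₂ h₁₃ h₂₃ hJ
  have hT := two_mul_circumradius_mul_height_sq_smul_footParallelogramVertex_vsub t h₁₂ h₁₃ h₂₃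
  set k := ⟪t.points i₂ -ᵥ t.points i₁, t.points i₃ -ᵥ t.points i₁⟫
  refine (smul_right_inj (pow_ne_zero 2 (mul_pos two_pos t.circumradius_pos).ne')).1 ?_
  rw [AffineMap.lineMap_vsub_left]
  linear_combination (norm := module) (4 * k * hx) • (t.circumcenter -ᵥ t.points i₁) - hT

theorem sum_points_vsub (p : P) :
    ∑ i, (t.points i -ᵥ p) =
      (t.orthocenter -ᵥ t.circumcenter) + (3 : ℝ) • (t.circumcenter -ᵥ p) := by
  simp only [t.orthocenter_vsub_circumcenter_eq_sum_vsub,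
    ← vsub_add_vsub_cancel (t.points _) t.circumcenter p, Finset.sum_add_distrib, Finset.sum_const,
    Finset.card_fin, ← Nat.cast_smul_eq_nsmul ℝ]
  norm_num

theorem line_points_orthocenter_eq_altitude {i : Fin 3} (h : t.orthocenter ≠ t.points i) :
    line[ℝ, t.points i, t.orthocenter] = t.altitude i := by
  have hdir := vsub_mem_direction t.orthocenter_mem_altitude (t.mem_altitude i)
  rw [direction_altitude, ← direction_affineSpan] at hdir
  rw [Set.pair_comm, affineSpan_pair_eq_altitude_iff]
  exact ⟨h, t.orthocenter_mem_affineSpan, hdir.1⟩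

/-- The pedal of the circumcenter on the line through the vertex `i` and the orthocenter: these
are the points `A*`, `B*`, `C*`. If the orthocenter is itself the vertex `i`, it is that vertex. -/
def circumcenterPedal (i : Fin 3) : P :=
  orthogonalProjection line[ℝ, t.points i, t.orthocenter] t.circumcenter

theorem circumcenterPedal_vsub_altitudeFoot {i : Fin 3} (h : t.orthocenter ≠ t.points i) :
    circumcenterPedal t i -ᵥ t.altitudeFoot i = (1 / 2 : ℝ) • (t.points i -ᵥ t.orthocenter) := by
  have hface : ∀ j ∈ Finset.univ.erase i,
      t.points j -ᵥ t.altitudeFoot i ∈ vectorSpan ℝ (t.points '' {i}ᶜ) := fun j hj ↦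
    vsub_mem_vectorSpan_of_mem_affineSpan_of_mem_affineSpan
      (mem_affineSpan ℝ (Set.mem_image_of_mem _ (Finset.ne_of_mem_erase hj)))
      (t.altitudeFoot_mem_affineSpan_image_compl i)
  have hsum : t.circumcenter -ᵥ ((1 / 2 : ℝ) • (t.points i -ᵥ t.orthocenter) +ᵥ t.altitudeFoot i) =
      (1 / 2 : ℝ) • ∑ j ∈ Finset.univ.erase i, (t.points j -ᵥ t.altitudeFoot i) := by
    rw [Finset.sum_erase_eq_sub (Finset.mem_univ i), sum_points_vsub, vsub_vadd_eq_vsub_sub,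
      ← vsub_sub_vsub_cancel_right (t.points i) t.orthocenter (t.altitudeFoot i),
      ← vsub_sub_vsub_cancel_right t.orthocenter t.circumcenter (t.altitudeFoot i)]
    module
  rw [circumcenterPedal, ← eq_vadd_iff_vsub_eq, coe_orthogonalProjection_eq_iff_mem,
    line_points_orthocenter_eq_altitude t h]
  refine ⟨vadd_mem_of_mem_direction (Submodule.smul_mem _ _ ?_) (t.altitudeFoot_mem_altitude i), ?_⟩
  · exact vsub_mem_direction (t.mem_altitude i) t.orthocenter_mem_altitude
  · rw [hsum]
    exact Submodule.smul_mem _ _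
      (Submodule.sum_mem _ fun j hj ↦ t.vectorSpan_isOrtho_altitude_direction i (hface j hj))

variable (s : Triangle ℝ P)

theorem circumcenter_eq_midpoint_of_points_eq_circumcenterPedal
    (hs : ∀ i, s.points i = circumcenterPedal t i) :
    s.circumcenter = midpoint ℝ t.circumcenter t.orthocenter := by
  have hspan := affineSpan_range_points_eq_of_forall_mem t s fun i ↦ by
    rw [hs]
    exact affineSpan_pair_le_of_mem_of_mem (mem_affineSpan ℝ (Set.mem_range_self i))
      t.orthocenter_mem_affineSpan (orthogonalProjection_mem _)
  refine circumcenter_eq_midpoint_of_angle_eq_pi_div_two s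
    (hspan ▸ t.circumcenter_mem_affineSpan) (hspan ▸ t.orthocenter_mem_affineSpan) fun i ↦ ?_
  rw [hs]
  exact angle_self_orthogonalProjection _ (right_mem_affineSpan_pair ℝ _ _)

theorem orthocenter_vsub_orthocenter_eq_sum_altitudeFoot_vsub
    (hH : ∀ i, t.orthocenter ≠ t.points i)
    (hs : ∀ i, s.points i = circumcenterPedal t i) :
    s.orthocenter -ᵥ t.orthocenter = ∑ i, (t.altitudeFoot i -ᵥ t.orthocenter) := by
  have hpoints (i) : s.points i -ᵥ t.orthocenter =
      (1 / 2 : ℝ) • (t.points i -ᵥ t.orthocenter) + (t.altitudeFoot i -ᵥ t.orthocenter) := by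
    rw [hs, ← circumcenterPedal_vsub_altitudeFoot t (hH i), vsub_add_vsub_cancel]
  have hmid : s.circumcenter -ᵥ t.orthocenter =
      (1 / 2 : ℝ) • (t.circumcenter -ᵥ t.orthocenter) := by
    rw [circumcenter_eq_midpoint_of_points_eq_circumcenterPedal t s hs, midpoint_vsub_right,
      invOf_eq_inv, one_div]
  have hsum := sum_points_vsub s t.orthocenter
  simp only [hpoints, Finset.sum_add_distrib, ← Finset.smul_sum, sum_points_vsub t] at hsum
  rw [← neg_vsub_eq_vsub_rev t.circumcenter,
    ← vsub_sub_vsub_cancel_right s.orthocenter s.circumcenter t.orthocenter, hmid] at hsum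
  linear_combination (norm := module) -hsum

theorem stmt14_general {J : P} (hH : ∀ i, t.orthocenter ≠ t.points i)
    (hs : ∀ i, s.points i = circumcenterPedal t i)
    (hJO : J ∈ line[ℝ, t.points 0, t.circumcenter])
    (hJ : J ∈ line[ℝ, t.altitudeFoot 1, t.altitudeFoot 2]) :
    Collinear ℝ {t.altitudeFoot 0, J, s.orthocenter} := by
  have hJT : _ • (J -ᵥ t.points 0) = _ :=
    inner_smul_vsub_eq_height_sq_smul_footParallelogramVertex_vsub t
      zero_ne_one (by decide) (by decide) hJO hJ
  have hDH : _ • (t.altitudeFoot 0 -ᵥ t.points 0) = _ :=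
    inner_smul_altitudeFoot_vsub_eq_height_sq_smul_orthocenter_vsub t
      zero_ne_one (by decide : (0 : Fin 3) ≠ 2) (by decide)
  set k := ⟪t.points 1 -ᵥ t.points 0, t.points 2 -ᵥ t.points 0⟫
  have hHT : s.orthocenter -ᵥ t.altitudeFoot 0 =
      footParallelogramVertex t 1 2 -ᵥ t.orthocenter := by
    rw [footParallelogramVertex_vsub, vsub_self, sub_zero,
      ← vsub_sub_vsub_cancel_right _ _ t.orthocenter,
      orthocenter_vsub_orthocenter_eq_sum_altitudeFoot_vsub t s hH hs, Fin.sum_univ_three]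
    abel
  have hparallel : t.height 0 ^ 2 • (s.orthocenter -ᵥ t.altitudeFoot 0) =
      k • (J -ᵥ t.altitudeFoot 0) := by
    rw [hHT, ← vsub_sub_vsub_cancel_right _ t.orthocenter (t.points 0), smul_sub, ← hJT, ← hDH,
      ← smul_sub, vsub_sub_vsub_cancel_right]
  have hmem : s.orthocenter ∈ line[ℝ, t.altitudeFoot 0, J] := by
    rw [← vsub_vadd s.orthocenter (t.altitudeFoot 0),
      (eq_inv_smul_iff₀ (pow_ne_zero 2 (t.height_pos 0).ne')).2 hparallel, smul_smul]
    exact smul_vsub_vadd_mem_affineSpan_pair _ _ _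
  rw [Set.pair_comm, Set.insert_comm]
  exact collinear_insert_of_mem_affineSpan_pair hmem

end Triangle

theorem stmt14 (A B C O H AH BH CH As Bs Cs Hs J : Pt)
    (hABC : AffineIndependent ℝ ![A, B, C])
    (hO : O = circumcenter3 A B C hABC)
    (hH : H = orthocenter3 A B C hABC)
    (hHA : H ≠ A) (hHB : H ≠ B) (hHC : H ≠ C) (hAO : A ≠ O)
    (hAH : AH = pedal A B C) (hBH : BH = pedal B C A) (hCH : CH = pedal C A B)
    (hAs : As = pedal O A H) (hBs : Bs = pedal O B H) (hCs : Cs = pedal O C H)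
    (hind : AffineIndependent ℝ ![As, Bs, Cs])
    (hHs : Hs = orthocenter3 As Bs Cs hind)
    (hJ1 : J ∈ affineSpan ℝ ({A, O} : Set Pt))
    (hJ2 : J ∈ affineSpan ℝ ({BH, CH} : Set Pt)) :
    Collinear ℝ ({AH, J, Hs} : Set Pt) := by
  let t : Affine.Triangle ℝ Pt := ⟨_, hABC⟩
  let s : Affine.Triangle ℝ Pt := ⟨_, hind⟩
  have hfoot₀ : t.altitudeFoot 0 = AH :=
    (altitudeFoot_eq_orthogonalProjection_line t (i₂ := 1) (i₃ := 2)
      (by decide) (by decide) (by decide)).trans hAH.symm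
  have hfoot₁ : t.altitudeFoot 1 = BH :=
    (altitudeFoot_eq_orthogonalProjection_line t (i₂ := 2) (i₃ := 0)
      (by decide) (by decide) (by decide)).trans hBH.symm
  have hfoot₂ : t.altitudeFoot 2 = CH :=
    (altitudeFoot_eq_orthogonalProjection_line t (i₂ := 0) (i₃ := 1)
      (by decide) (by decide) (by decide)).trans hCH.symm
  have hne : ∀ i, t.orthocenter ≠ t.points i := by
    subst hH
    exact Fin.forall_fin_succ.2 ⟨hHA, Fin.forall_fin_two.2 ⟨hHB, hHC⟩⟩
  have hpedal : ∀ i, s.points i = circumcenterPedal t i := by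
    rw [hO, hH] at hAs hBs hCs
    exact Fin.forall_fin_succ.2 ⟨hAs, Fin.forall_fin_two.2 ⟨hBs, hCs⟩⟩
  rw [hO] at hJ1
  rw [← hfoot₁, ← hfoot₂] at hJ2
  rw [← hfoot₀, hHs]
  exact stmt14_general t s hne hpedal hJ1 hJ2

end
end
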